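/- Under the hypotheses of the energy decay identity, if additionally γ₁ g(θ) - h²(θ) > 0 for all θ, then the energy E(t) is non-increasing in t; in particular E(t) ≤ E(0) for all t ≥ 0. -/

import Mathlib

/-- Partial derivative in the first (space) variable. -/
noncomputable def pdx (f : ℝ → ℝ → ℝ) (x t : ℝ) : ℝ := deriv (fun y => f y t) x

/-- Partial derivative in the second (time) variable. -/
noncomputable def pdt (f : ℝ → ℝ → ℝ) (x t : ℝ) : ℝ := deriv (fun s => f x s) t

/-!
Each time slice of the solution has compact support, but nothing is assumed uniformly in time, so
one has to exclude energy entering from infinity. Near the edge of the support `θ` is a constant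
`θ∞`, and a Carleman estimate with a weight depending on `x` alone, applied simultaneously to the
parabolic equation and to the two Riemann invariants of the wave equation, shows that the solution
vanishes across every curve whose speed exceeds `c(θ∞)`. Such a curve may be followed forward or
backward in time, so a support bound at one time spreads to nearby times once some bound is known
on a time interval, and Baire's theorem supplies enough such intervals to make the bounds locally
uniform. On a large rectangle the divergence theorem then expresses the change of energy as minus
the integral of the quadratic form `γ₁ θ_t² + 2 h θ_t u_x + g u_x²`, which is nonnegative because
`γ₁ g - h² ≥ 0`.
-/

open Set Filter Topology MeasureTheory Function

/-! ### Smooth functions of space and time -/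

/-- A function of space and time, in curried form, that is `C^∞` in both variables jointly. -/
abbrev JointlySmooth (f : ℝ → ℝ → ℝ) : Prop := ContDiff ℝ (⊤ : ℕ∞) (uncurry f)

namespace JointlySmooth

variable {f : ℝ → ℝ → ℝ}

lemma continuous (hf : JointlySmooth f) : Continuous (uncurry f) :=
  ContDiff.continuous hf

lemma continuous_left (hf : JointlySmooth f) (t : ℝ) : Continuous fun x => f x t :=
  hf.continuous.comp (by fun_prop : Continuous fun x : ℝ => (x, t))

lemma continuous_right (hf : JointlySmooth f) (x : ℝ) : Continuous fun t => f x t :=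
  hf.continuous.comp (by fun_prop : Continuous fun t : ℝ => (x, t))

lemma hasFDerivAt (hf : JointlySmooth f) (p : ℝ × ℝ) :
    HasFDerivAt (uncurry f) (fderiv ℝ (uncurry f) p) p :=
  (ContDiff.differentiable hf (by simp) p).hasFDerivAt

lemma hasDerivAt_fderiv_left (hf : JointlySmooth f) (x t : ℝ) :
    HasDerivAt (fun y => f y t) (fderiv ℝ (uncurry f) (x, t) (1, 0)) x :=
  (hf.hasFDerivAt (x, t)).comp_hasDerivAt (f := fun y => (y, t)) x
    ((hasDerivAt_id x).prodMk (hasDerivAt_const x t))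

lemma hasDerivAt_fderiv_right (hf : JointlySmooth f) (x t : ℝ) :
    HasDerivAt (fun s => f x s) (fderiv ℝ (uncurry f) (x, t) (0, 1)) t :=
  (hf.hasFDerivAt (x, t)).comp_hasDerivAt (f := fun s => (x, s)) t
    ((hasDerivAt_const t x).prodMk (hasDerivAt_id t))

lemma pdx_eq_fderiv (hf : JointlySmooth f) (x t : ℝ) :
    pdx f x t = fderiv ℝ (uncurry f) (x, t) (1, 0) :=
  (hf.hasDerivAt_fderiv_left x t).deriv

lemma pdt_eq_fderiv (hf : JointlySmooth f) (x t : ℝ) :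
    pdt f x t = fderiv ℝ (uncurry f) (x, t) (0, 1) :=
  (hf.hasDerivAt_fderiv_right x t).deriv

lemma hasDerivAt_pdx (hf : JointlySmooth f) (x t : ℝ) :
    HasDerivAt (fun y => f y t) (pdx f x t) x :=
  (hf.hasDerivAt_fderiv_left x t).differentiableAt.hasDerivAt

lemma hasDerivAt_pdt (hf : JointlySmooth f) (x t : ℝ) :
    HasDerivAt (fun s => f x s) (pdt f x t) t :=
  (hf.hasDerivAt_fderiv_right x t).differentiableAt.hasDerivAt

lemma contDiff_fderiv_apply (hf : JointlySmooth f) (v : ℝ × ℝ) :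
    ContDiff ℝ (⊤ : ℕ∞) fun p => fderiv ℝ (uncurry f) p v :=
  (ContDiff.fderiv_right hf (by simp)).clm_apply contDiff_const

lemma pdx (hf : JointlySmooth f) : JointlySmooth (pdx f) := by
  have h : uncurry (_root_.pdx f) = fun p => fderiv ℝ (uncurry f) p (1, 0) :=
    funext fun p => hf.pdx_eq_fderiv p.1 p.2
  exact (congrArg (ContDiff ℝ _) h).mpr (hf.contDiff_fderiv_apply (1, 0))

lemma pdt (hf : JointlySmooth f) : JointlySmooth (pdt f) := by
  have h : uncurry (_root_.pdt f) = fun p => fderiv ℝ (uncurry f) p (0, 1) :=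
    funext fun p => hf.pdt_eq_fderiv p.1 p.2
  exact (congrArg (ContDiff ℝ _) h).mpr (hf.contDiff_fderiv_apply (0, 1))

lemma pdt_pdx_comm (hf : JointlySmooth f) (x t : ℝ) :
    _root_.pdt (_root_.pdx f) x t = _root_.pdx (_root_.pdt f) x t := by
  have hsymm : IsSymmSndFDerivAt ℝ (uncurry f) (x, t) :=
    ContDiffAt.isSymmSndFDerivAt (ContDiff.contDiffAt hf)
      (by simpa using WithTop.coe_le_coe.2 (le_top : (2 : ℕ∞) ≤ ⊤))
  have hderiv (v : ℝ × ℝ) : HasFDerivAt (fun p => fderiv ℝ (uncurry f) p v)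
      ((fderiv ℝ (fderiv ℝ (uncurry f)) (x, t)).flip v) (x, t) :=
    ((ContDiff.fderiv_right hf (m := (⊤ : ℕ∞)) (by simp)).differentiable (by simp)
      (x, t)).hasFDerivAt.clm_apply (hasFDerivAt_const v _) |>.congr_fderiv (by ext <;> simp)
  have hx : uncurry (_root_.pdx f) = fun p => fderiv ℝ (uncurry f) p (1, 0) :=
    funext fun p => hf.pdx_eq_fderiv p.1 p.2
  have ht : uncurry (_root_.pdt f) = fun p => fderiv ℝ (uncurry f) p (0, 1) :=
    funext fun p => hf.pdt_eq_fderiv p.1 p.2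
  rw [hf.pdx.pdt_eq_fderiv, hf.pdt.pdx_eq_fderiv, hx, ht, (hderiv _).fderiv, (hderiv _).fderiv]
  exact hsymm.eq _ _

end JointlySmooth

/-- The function `f` in the frame whose origin follows the curve `x = -κ t`. -/
def movingFrame (κ : ℝ → ℝ) (f : ℝ → ℝ → ℝ) (X t : ℝ) : ℝ := f (X - κ t) t

section movingFrame

variable {κ : ℝ → ℝ} {f : ℝ → ℝ → ℝ}

lemma JointlySmooth.movingFrame (hκ : ContDiff ℝ (⊤ : ℕ∞) κ) (hf : JointlySmooth f) :
    JointlySmooth (movingFrame κ f) :=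
  ContDiff.comp hf ((contDiff_fst.sub (hκ.comp contDiff_snd)).prodMk contDiff_snd)

lemma pdx_movingFrame (X t : ℝ) :
    pdx (movingFrame κ f) X t = movingFrame κ (pdx f) X t :=
  deriv_comp_sub_const (f := fun y => f y t) (κ t) X

lemma pdt_movingFrame (hκ : Differentiable ℝ κ) (hf : JointlySmooth f) (X t : ℝ) :
    pdt (movingFrame κ f) X t =
      movingFrame κ (pdt f) X t - deriv κ t * movingFrame κ (pdx f) X t := by
  have hcurve : HasDerivAt (fun s => (X - κ s, s)) (-deriv κ t, (1 : ℝ)) t :=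
    ((hκ t).hasDerivAt.const_sub X).prodMk (hasDerivAt_id t)
  have hdecomp : ((-deriv κ t, 1) : ℝ × ℝ) = (0, 1) - deriv κ t • (1, 0) := by
    ext <;> simp
  have hderiv := ((hf.hasFDerivAt (X - κ t, t)).comp_hasDerivAt
    (f := fun s => (X - κ s, s)) t hcurve).deriv
  rw [hdecomp, map_sub, map_smul, smul_eq_mul, ← hf.pdx_eq_fderiv, ← hf.pdt_eq_fderiv] at hderiv
  exact hderiv

end movingFrame

/-- The primitive of `f` in the space variable that vanishes at `x = b`. -/
noncomputable def spacePrimitive (b : ℝ) (f : ℝ → ℝ → ℝ) (x t : ℝ) : ℝ := ∫ y in b..x, f y t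

section spacePrimitive

variable {b : ℝ} {f : ℝ → ℝ → ℝ}

lemma continuous_spacePrimitive (hf : Continuous (uncurry f)) :
    Continuous (uncurry (spacePrimitive b f)) := by
  have h : Continuous (uncurry fun (p : ℝ × ℝ) y => f y p.2) :=
    hf.comp (by fun_prop : Continuous fun q : (ℝ × ℝ) × ℝ => (q.2, q.1.2))
  exact intervalIntegral.continuous_parametric_intervalIntegral_of_continuous h continuous_fst

lemma hasDerivAt_spacePrimitive_left (hf : JointlySmooth f) (x t : ℝ) :
    HasDerivAt (fun y => spacePrimitive b f y t) (f x t) x :=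
  (hf.continuous_left t).integral_hasStrictDerivAt b x |>.hasDerivAt

lemma hasDerivAt_spacePrimitive_right (hf : JointlySmooth f) (x t : ℝ) :
    HasDerivAt (fun s => spacePrimitive b f x s) (spacePrimitive b (pdt f) x t) t := by
  obtain ⟨K, hK⟩ := (isCompact_uIcc.prod isCompact_Icc).exists_bound_of_continuousOn
    (s := uIcc b x ×ˢ Icc (t - 1) (t + 1)) hf.pdt.continuous.continuousOn
  refine (intervalIntegral.hasDerivAt_integral_of_dominated_loc_of_deriv_le
    (F := fun s y => f y s) (F' := fun s y => pdt f y s) (bound := fun _ => K)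
    (s := Icc (t - 1) (t + 1)) (Icc_mem_nhds (by linarith) (by linarith))
    (.of_forall fun s => (hf.continuous_left s).aestronglyMeasurable)
    ((hf.continuous_left t).intervalIntegrable _ _)
    (hf.pdt.continuous_left t).aestronglyMeasurable
    (.of_forall fun y hy s hs => hK (y, s) ⟨uIoc_subset_uIcc hy, hs⟩)
    intervalIntegrable_const (.of_forall fun y _ s _ => hf.hasDerivAt_pdt y s)).2

lemma pdx_spacePrimitive (hf : JointlySmooth f) (x t : ℝ) :
    pdx (spacePrimitive b f) x t = f x t :=
  (hasDerivAt_spacePrimitive_left hf x t).deriv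

lemma pdt_spacePrimitive (hf : JointlySmooth f) (x t : ℝ) :
    pdt (spacePrimitive b f) x t = spacePrimitive b (pdt f) x t :=
  (hasDerivAt_spacePrimitive_right hf x t).deriv

lemma hasFDerivAt_spacePrimitive (hf : JointlySmooth f) (p : ℝ × ℝ) :
    HasFDerivAt (uncurry (spacePrimitive b f))
      (uncurry f p • ContinuousLinearMap.fst ℝ ℝ ℝ +
        uncurry (spacePrimitive b (pdt f)) p • ContinuousLinearMap.snd ℝ ℝ ℝ) p := by
  have hpartials := hasStrictFDerivAt_uncurry_coprod (u := p) (f := spacePrimitive b f)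
    (f₁ := fun x t => f x t • ContinuousLinearMap.id ℝ ℝ)
    (f₂ := fun x t => spacePrimitive b (pdt f) x t • ContinuousLinearMap.id ℝ ℝ)
    (.of_forall fun q => (hasDerivAt_spacePrimitive_left hf q.1 q.2).hasFDerivAt.congr_fderiv
      (by ext; simp [HasUncurry.uncurry]))
    (.of_forall fun q => (hasDerivAt_spacePrimitive_right hf q.1 q.2).hasFDerivAt.congr_fderiv
      (by ext; simp [HasUncurry.uncurry]))
    (hf.continuous.smul continuous_const).continuousAt
    ((continuous_spacePrimitive hf.pdt.continuous).smul continuous_const).continuousAt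
  exact hpartials.hasFDerivAt.congr_fderiv (by ext <;> simp [HasUncurry.uncurry, uncurry])

lemma contDiff_nat_spacePrimitive (hf : JointlySmooth f) (n : ℕ) :
    ContDiff ℝ n (uncurry (spacePrimitive b f)) := by
  induction n generalizing f with
  | zero => exact contDiff_zero.2 (continuous_spacePrimitive hf.continuous)
  | succ n ih =>
    refine contDiff_succ_iff_hasFDerivAt.2 ⟨_, ?_, hasFDerivAt_spacePrimitive hf⟩
    exact ((ContDiff.of_le hf (by exact_mod_cast le_top)).smul contDiff_const).add
      ((ih hf.pdt).smul contDiff_const)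

lemma JointlySmooth.spacePrimitive (hf : JointlySmooth f) :
    JointlySmooth (spacePrimitive b f) :=
  contDiff_infty.2 (contDiff_nat_spacePrimitive hf)

end spacePrimitive

/-! ### Integrals over rectangles -/

lemma setIntegral_prod_pdx_add_pdt {A B : ℝ → ℝ → ℝ} (hA : JointlySmooth A)
    (hB : JointlySmooth B) {a b t₀ t₁ : ℝ} (hab : a ≤ b) (ht : t₀ ≤ t₁) :
    ∫ p in Icc a b ×ˢ Icc t₀ t₁, pdx A p.1 p.2 + pdt B p.1 p.2 =
      (((∫ x in a..b, B x t₁) - ∫ x in a..b, B x t₀) + ∫ t in t₀..t₁, A b t) -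
        ∫ t in t₀..t₁, A a t := by
  simp only [hA.pdx_eq_fderiv, hB.pdt_eq_fderiv, Icc_prod_Icc]
  have hcont : Continuous fun p : ℝ × ℝ =>
      fderiv ℝ (uncurry A) p (1, 0) + fderiv ℝ (uncurry B) p (0, 1) :=
    (hA.contDiff_fderiv_apply _).continuous.add (hB.contDiff_fderiv_apply _).continuous
  exact integral_divergence_prod_Icc_of_hasFDerivAt_of_le (uncurry A) (uncurry B) _ _
    (a, t₀) (b, t₁) ⟨hab, ht⟩ hA.continuous.continuousOn hB.continuous.continuousOn
    (fun p _ => hA.hasFDerivAt p) (fun p _ => hB.hasFDerivAt p)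
    (hcont.continuousOn.integrableOn_compact isCompact_Icc)

/-- The Carleman weight `e^{2τ(ψ(x) - ψ(a))}`, normalized to be `1` at `x = a`. -/
noncomputable def carlemanWeight (ψ : ℝ → ℝ) (τ a x : ℝ) : ℝ := Real.exp (2 * τ * (ψ x - ψ a))

/-- The integral of `f` over `[a, b] × [t₀, t₁]` against the Carleman weight. -/
noncomputable def carlemanIntegral (ψ : ℝ → ℝ) (a b t₀ t₁ τ : ℝ) (f : ℝ → ℝ → ℝ) : ℝ :=
  ∫ p in Icc a b ×ˢ Icc t₀ t₁, carlemanWeight ψ τ a p.1 * f p.1 p.2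

section weighted

variable {ψ : ℝ → ℝ} {τ a b t₀ t₁ : ℝ} {f g : ℝ → ℝ → ℝ}

lemma carlemanWeight_pos (x : ℝ) : 0 < carlemanWeight ψ τ a x := Real.exp_pos _

lemma contDiff_carlemanWeight (hψ : ContDiff ℝ (⊤ : ℕ∞) ψ) :
    ContDiff ℝ (⊤ : ℕ∞) (carlemanWeight ψ τ a) := by
  unfold carlemanWeight; fun_prop

lemma hasDerivAt_carlemanWeight (hψ : ContDiff ℝ (⊤ : ℕ∞) ψ) (x : ℝ) :
    HasDerivAt (carlemanWeight ψ τ a) (carlemanWeight ψ τ a x * (2 * τ * deriv ψ x)) x :=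
  (((hψ.differentiable (by simp) x).hasDerivAt.sub_const (ψ a)).const_mul (2 * τ)).exp

lemma integrableOn_carlemanWeight_mul (hψ : ContDiff ℝ (⊤ : ℕ∞) ψ) (hf : Continuous (uncurry f)) :
    IntegrableOn (fun p : ℝ × ℝ => carlemanWeight ψ τ a p.1 * f p.1 p.2)
      (Icc a b ×ˢ Icc t₀ t₁) := by
  have hweight := contDiff_carlemanWeight (τ := τ) (a := a) hψ
  exact (by fun_prop : Continuous fun p : ℝ × ℝ =>
    carlemanWeight ψ τ a p.1 * f p.1 p.2).continuousOn.integrableOn_compact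
      (isCompact_Icc.prod isCompact_Icc)

lemma carlemanIntegral_mono (hψ : ContDiff ℝ (⊤ : ℕ∞) ψ) (hf : Continuous (uncurry f))
    (hg : Continuous (uncurry g)) (h : ∀ x ∈ Icc a b, ∀ t ∈ Icc t₀ t₁, f x t ≤ g x t) :
    carlemanIntegral ψ a b t₀ t₁ τ f ≤ carlemanIntegral ψ a b t₀ t₁ τ g :=
  setIntegral_mono_on (integrableOn_carlemanWeight_mul hψ hf)
    (integrableOn_carlemanWeight_mul hψ hg)
    (measurableSet_Icc.prod measurableSet_Icc) fun p hp =>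
      mul_le_mul_of_nonneg_left (h p.1 hp.1 p.2 hp.2) (carlemanWeight_pos p.1).le

lemma carlemanIntegral_add (hψ : ContDiff ℝ (⊤ : ℕ∞) ψ) (hf : Continuous (uncurry f))
    (hg : Continuous (uncurry g)) :
    carlemanIntegral ψ a b t₀ t₁ τ (fun x t => f x t + g x t) =
      carlemanIntegral ψ a b t₀ t₁ τ f + carlemanIntegral ψ a b t₀ t₁ τ g := by
  simp only [carlemanIntegral, mul_add]
  exact integral_add (integrableOn_carlemanWeight_mul hψ hf) (integrableOn_carlemanWeight_mul hψ hg)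

lemma carlemanIntegral_const_mul (r : ℝ) :
    carlemanIntegral ψ a b t₀ t₁ τ (fun x t => r * f x t) =
      r * carlemanIntegral ψ a b t₀ t₁ τ f := by
  simp only [carlemanIntegral, mul_left_comm _ r, integral_const_mul]

lemma carlemanIntegral_le_const_mul {K : ℝ} (hψ : ContDiff ℝ (⊤ : ℕ∞) ψ)
    (hf : Continuous (uncurry f)) (hg : Continuous (uncurry g))
    (h : ∀ x ∈ Icc a b, ∀ t ∈ Icc t₀ t₁, f x t ≤ K * g x t) :
    carlemanIntegral ψ a b t₀ t₁ τ f ≤ K * carlemanIntegral ψ a b t₀ t₁ τ g :=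
  carlemanIntegral_const_mul (f := g) K ▸ carlemanIntegral_mono hψ hf (by fun_prop) h

lemma carlemanIntegral_sum {ι : Type*} [Fintype ι] {F : ι → ℝ → ℝ → ℝ}
    (hψ : ContDiff ℝ (⊤ : ℕ∞) ψ) (hF : ∀ i, Continuous (uncurry (F i))) :
    carlemanIntegral ψ a b t₀ t₁ τ (fun x t => ∑ i, F i x t) =
      ∑ i, carlemanIntegral ψ a b t₀ t₁ τ (F i) := by
  simp only [carlemanIntegral, Finset.mul_sum]
  exact integral_finsetSum _ fun i _ => integrableOn_carlemanWeight_mul hψ (hF i)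

lemma carlemanIntegral_divergence {A B : ℝ → ℝ → ℝ} (hA : JointlySmooth A)
    (hB : JointlySmooth B) (hψ : ContDiff ℝ (⊤ : ℕ∞) ψ) (hab : a ≤ b) (ht : t₀ ≤ t₁)
    (hB₀ : ∀ x ∈ Icc a b, B x t₀ = 0) (hB₁ : ∀ x ∈ Icc a b, B x t₁ = 0)
    (hAb : ∀ t ∈ Icc t₀ t₁, A b t = 0) :
    carlemanIntegral ψ a b t₀ t₁ τ
        (fun x t => 2 * τ * deriv ψ x * A x t + pdx A x t + pdt B x t) =
      -∫ t in t₀..t₁, A a t := by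
  have hweight := contDiff_carlemanWeight (τ := τ) (a := a) hψ
  have hdiv := setIntegral_prod_pdx_add_pdt
    (A := fun x t => carlemanWeight ψ τ a x * A x t)
    (B := fun x t => carlemanWeight ψ τ a x * B x t)
    (by unfold JointlySmooth; fun_prop) (by unfold JointlySmooth; fun_prop) hab ht
  have hpdx (x t : ℝ) : pdx (fun x t => carlemanWeight ψ τ a x * A x t) x t =
      carlemanWeight ψ τ a x * (2 * τ * deriv ψ x) * A x t +
        carlemanWeight ψ τ a x * pdx A x t :=
    ((hasDerivAt_carlemanWeight hψ x).mul (hA.hasDerivAt_pdx x t)).deriv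
  have hpdt (x t : ℝ) : pdt (fun x t => carlemanWeight ψ τ a x * B x t) x t =
      carlemanWeight ψ τ a x * pdt B x t :=
    ((hB.hasDerivAt_pdt x t).const_mul _).deriv
  have htime {t : ℝ} (h : ∀ x ∈ Icc a b, B x t = 0) :
      ∫ x in a..b, carlemanWeight ψ τ a x * B x t = 0 :=
    intervalIntegral.integral_zero_ae (.of_forall fun x hx => by
      rw [h x (uIoc_of_le hab ▸ hx |> Ioc_subset_Icc_self), mul_zero])
  have hright : ∫ t in t₀..t₁, carlemanWeight ψ τ a b * A b t = 0 :=
    intervalIntegral.integral_zero_ae (.of_forall fun t ht' => by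
      rw [hAb t (uIoc_of_le ht ▸ ht' |> Ioc_subset_Icc_self), mul_zero])
  have hleft : carlemanWeight ψ τ a a = 1 := by simp [carlemanWeight]
  simp only [hpdx, hpdt, htime hB₀, htime hB₁, hright, hleft, one_mul, sub_zero, add_zero,
    zero_sub] at hdiv
  rw [← hdiv, carlemanIntegral]
  congr 1 with p
  ring

lemma mul_carlemanIntegral_le_sub_of_le_divergence {A B : ℝ → ℝ → ℝ} {α β : ℝ}
    (hA : JointlySmooth A) (hB : JointlySmooth B) (hf : Continuous (uncurry f))
    (hg : Continuous (uncurry g)) (hψ : ContDiff ℝ (⊤ : ℕ∞) ψ) (hab : a ≤ b) (ht : t₀ ≤ t₁)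
    (hB₀ : ∀ x ∈ Icc a b, B x t₀ = 0) (hB₁ : ∀ x ∈ Icc a b, B x t₁ = 0)
    (hAb : ∀ t ∈ Icc t₀ t₁, A b t = 0)
    (h : ∀ x ∈ Icc a b, ∀ t ∈ Icc t₀ t₁,
      α * f x t ≤ β * g x t + (2 * τ * deriv ψ x * A x t + pdx A x t + pdt B x t)) :
    α * carlemanIntegral ψ a b t₀ t₁ τ f ≤
      β * carlemanIntegral ψ a b t₀ t₁ τ g - ∫ t in t₀..t₁, A a t := by
  have hdψ := (contDiff_infty_iff_deriv.1 hψ).2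
  have hAx := hA.pdx
  have hBt := hB.pdt
  rw [sub_eq_add_neg, ← carlemanIntegral_divergence hA hB hψ hab ht hB₀ hB₁ hAb,
    ← carlemanIntegral_const_mul, ← carlemanIntegral_const_mul,
    ← carlemanIntegral_add hψ (by fun_prop) (by fun_prop)]
  exact carlemanIntegral_mono hψ (by fun_prop) (by fun_prop) h

end weighted

/-! ### Carleman estimates -/

section rectangleBounds

variable {a b t₀ t₁ : ℝ} {f : ℝ → ℝ → ℝ}

lemma exists_forall_le_of_continuous (hf : Continuous (uncurry f)) :
    ∃ K, ∀ x ∈ Icc a b, ∀ t ∈ Icc t₀ t₁, f x t ≤ K := by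
  obtain ⟨K, hK⟩ := (isCompact_Icc.prod isCompact_Icc).bddAbove_image
    (hf.continuousOn (s := Icc a b ×ˢ Icc t₀ t₁))
  exact ⟨K, fun x hx t ht => hK ⟨(x, t), ⟨hx, ht⟩, rfl⟩⟩

lemma exists_pos_forall_le_of_continuous (hf : Continuous (uncurry f))
    (hpos : ∀ x ∈ Icc a b, ∀ t ∈ Icc t₀ t₁, 0 < f x t) :
    ∃ m > 0, ∀ x ∈ Icc a b, ∀ t ∈ Icc t₀ t₁, m ≤ f x t := by
  obtain ⟨m, hm, hle⟩ := (isCompact_Icc.prod isCompact_Icc).exists_forall_le'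
    (hf.continuousOn (s := Icc a b ×ˢ Icc t₀ t₁)) (fun p hp => hpos _ hp.1 _ hp.2)
  exact ⟨m, hm, fun x hx t ht => hle (x, t) ⟨hx, ht⟩⟩

end rectangleBounds

section carleman

variable {ψ : ℝ → ℝ} {a b t₀ t₁ : ℝ}

lemma transport_divergence {w μ : ℝ → ℝ → ℝ} (hw : JointlySmooth w) (hμ : JointlySmooth μ)
    (σ x t : ℝ) :
    pdx (fun x t => σ * μ x t * w x t ^ 2) x t + pdt (fun x t => σ * w x t ^ 2) x t =
      σ * pdx μ x t * w x t ^ 2 + 2 * σ * w x t * (pdt w x t + μ x t * pdx w x t) := by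
  have hx := (((hμ.hasDerivAt_pdx x t).const_mul σ).mul ((hw.hasDerivAt_pdx x t).fun_pow 2)).deriv
  have ht := (((hw.hasDerivAt_pdt x t).fun_pow 2).const_mul σ).deriv
  exact (congrArg₂ (· + ·) hx ht).trans (by ring)

lemma exists_carleman_transport {w μ : ℝ → ℝ → ℝ} {σ : ℝ} (hw : JointlySmooth w)
    (hμ : JointlySmooth μ) (hψ : ContDiff ℝ (⊤ : ℕ∞) ψ) (hab : a ≤ b) (ht : t₀ ≤ t₁)
    (hσμ : ∀ x ∈ Icc a b, ∀ t ∈ Icc t₀ t₁, 0 < σ * μ x t)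
    (hψ' : ∀ x ∈ Icc a b, 0 < deriv ψ x)
    (hw₀ : ∀ x ∈ Icc a b, w x t₀ = 0) (hw₁ : ∀ x ∈ Icc a b, w x t₁ = 0)
    (hwb : ∀ t ∈ Icc t₀ t₁, w b t = 0) :
    ∃ C ≥ 0, ∀ᶠ τ in atTop,
      τ * carlemanIntegral ψ a b t₀ t₁ τ (fun x t => w x t ^ 2) ≤
        C * carlemanIntegral ψ a b t₀ t₁ τ (fun x t => (pdt w x t + μ x t * pdx w x t) ^ 2) := by
  have hdψ := (contDiff_infty_iff_deriv.1 hψ).2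
  have hwx := hw.pdx
  have hwt := hw.pdt
  have hμx := hμ.pdx
  obtain ⟨m, hm, hm_le⟩ := exists_pos_forall_le_of_continuous
    (f := fun x t => 2 * deriv ψ x * (σ * μ x t)) (by fun_prop)
    (fun x hx t ht => mul_pos (mul_pos two_pos (hψ' x hx)) (hσμ x hx t ht))
  obtain ⟨K, hK⟩ := exists_forall_le_of_continuous (a := a) (b := b) (t₀ := t₀) (t₁ := t₁)
    (f := fun x t => σ ^ 2 - σ * pdx μ x t) (by fun_prop)
  refine ⟨2 / m, by positivity, ?_⟩
  filter_upwards [eventually_ge_atTop (2 * K / m), eventually_ge_atTop 0] with τ hτ hτ0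
  have hτK : K ≤ τ * (m / 2) := by rw [div_le_iff₀ hm] at hτ; linarith
  have hestimate := mul_carlemanIntegral_le_sub_of_le_divergence (τ := τ) (α := τ * (m / 2))
    (β := 1) (A := fun x t => σ * μ x t * w x t ^ 2) (B := fun x t => σ * w x t ^ 2)
    (f := fun x t => w x t ^ 2) (g := fun x t => (pdt w x t + μ x t * pdx w x t) ^ 2)
    (by unfold JointlySmooth; fun_prop) (by unfold JointlySmooth; fun_prop)
    (by fun_prop) (by fun_prop) hψ hab ht
    (fun x hx => by simp [hw₀ x hx]) (fun x hx => by simp [hw₁ x hx])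
    (fun t ht => by simp [hwb t ht]) (fun x hx t ht => by
      rw [add_assoc, transport_divergence hw hμ]
      nlinarith [mul_le_mul_of_nonneg_right (hm_le x hx t ht) (mul_nonneg hτ0 (sq_nonneg (w x t))),
        mul_le_mul_of_nonneg_right (hK x hx t ht) (sq_nonneg (w x t)),
        mul_le_mul_of_nonneg_right hτK (sq_nonneg (w x t)),
        sq_nonneg (σ * w x t + (pdt w x t + μ x t * pdx w x t))])
  have hleft : 0 ≤ ∫ t in t₀..t₁, σ * μ a t * w a t ^ 2 :=
    intervalIntegral.integral_nonneg ht fun t ht =>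
      mul_nonneg (hσμ a (left_mem_Icc.2 hab) t ht).le (sq_nonneg _)
  rw [div_mul_eq_mul_div, le_div_iff₀ hm]
  linarith

/-- The conjugated derivative `e^{-τψ} ∂ₓ (e^{τψ} V)`. -/
noncomputable def conjDeriv (ψ : ℝ → ℝ) (τ : ℝ) (V : ℝ → ℝ → ℝ) (x t : ℝ) : ℝ :=
  pdx V x t + τ * deriv ψ x * V x t

/-- The space component of the vector field whose weighted divergence controls the commutator in
the Carleman estimate for `∂ₜ - G ∂ₓ²`. -/
noncomputable def parabolicFlux (ψ : ℝ → ℝ) (τ : ℝ) (G V : ℝ → ℝ → ℝ) (x t : ℝ) : ℝ :=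
  2 * G x t * conjDeriv ψ τ V x t * pdt V x t +
    2 * τ * deriv ψ x * G x t ^ 2 * conjDeriv ψ τ V x t ^ 2 +
    2 * τ ^ 3 * G x t ^ 2 * deriv ψ x ^ 3 * V x t ^ 2

/-- The time component of the vector field with space component `parabolicFlux`. -/
noncomputable def parabolicDensity (ψ : ℝ → ℝ) (τ : ℝ) (G V : ℝ → ℝ → ℝ) (x t : ℝ) : ℝ :=
  -G x t * conjDeriv ψ τ V x t ^ 2 + τ ^ 2 * G x t * deriv ψ x ^ 2 * V x t ^ 2

section parabolicDivergence

variable {τ : ℝ} {G V : ℝ → ℝ → ℝ}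

lemma JointlySmooth.conjDeriv (hV : JointlySmooth V) (hψ : ContDiff ℝ (⊤ : ℕ∞) ψ) :
    JointlySmooth (conjDeriv ψ τ V) := by
  have hVx := hV.pdx
  unfold JointlySmooth _root_.conjDeriv
  fun_prop

lemma hasDerivAt_conjDeriv_left (hV : JointlySmooth V) (hψ : ContDiff ℝ (⊤ : ℕ∞) ψ) (x t : ℝ) :
    HasDerivAt (fun y => conjDeriv ψ τ V y t)
      (pdx (pdx V) x t + τ * (deriv (deriv ψ) x * V x t + deriv ψ x * pdx V x t)) x := by
  have hdψ := (contDiff_infty_iff_deriv.1 hψ).2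
  have hψx := (hdψ.differentiable (by simp) x).hasDerivAt
  exact ((hV.pdx.hasDerivAt_pdx x t).add
    ((hψx.const_mul τ).mul (hV.hasDerivAt_pdx x t))).congr_deriv (by ring)

lemma hasDerivAt_conjDeriv_right (hV : JointlySmooth V) (x t : ℝ) :
    HasDerivAt (fun s => conjDeriv ψ τ V x s)
      (pdx (pdt V) x t + τ * deriv ψ x * pdt V x t) t :=
  hV.pdt_pdx_comm x t ▸
    (hV.pdx.hasDerivAt_pdt x t).add ((hV.hasDerivAt_pdt x t).const_mul (τ * deriv ψ x))

lemma pdx_parabolicFlux (hG : JointlySmooth G) (hV : JointlySmooth V)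
    (hψ : ContDiff ℝ (⊤ : ℕ∞) ψ) (x t : ℝ) :
    pdx (parabolicFlux ψ τ G V) x t =
      let Y := conjDeriv ψ τ V x t
      let Yx := pdx (pdx V) x t + τ * (deriv (deriv ψ) x * V x t + deriv ψ x * pdx V x t)
      2 * (pdx G x t * Y * pdt V x t + G x t * Yx * pdt V x t + G x t * Y * pdx (pdt V) x t) +
        2 * τ * (deriv (deriv ψ) x * G x t ^ 2 * Y ^ 2 +
          2 * deriv ψ x * G x t * pdx G x t * Y ^ 2 + 2 * deriv ψ x * G x t ^ 2 * Y * Yx) +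
        2 * τ ^ 3 * (2 * G x t * pdx G x t * deriv ψ x ^ 3 * V x t ^ 2 +
          3 * G x t ^ 2 * deriv ψ x ^ 2 * deriv (deriv ψ) x * V x t ^ 2 +
          2 * G x t ^ 2 * deriv ψ x ^ 3 * V x t * pdx V x t) := by
  have hdψ := (contDiff_infty_iff_deriv.1 hψ).2
  have hψx := (hdψ.differentiable (by simp) x).hasDerivAt
  have hGx := hG.hasDerivAt_pdx x t
  have hVx := hV.hasDerivAt_pdx x t
  have hYx := hasDerivAt_conjDeriv_left (τ := τ) hV hψ x t
  have hflux := ((((hGx.const_mul 2).mul hYx).mul (hV.pdt.hasDerivAt_pdx x t)).add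
    (((hψx.const_mul (2 * τ)).mul (hGx.fun_pow 2)).mul (hYx.fun_pow 2))).add
    ((((hGx.fun_pow 2).const_mul (2 * τ ^ 3)).mul (hψx.fun_pow 3)).mul (hVx.fun_pow 2))
  exact hflux.deriv.trans (by simp only [Pi.mul_apply]; push_cast; ring)

lemma pdt_parabolicDensity (hG : JointlySmooth G) (hV : JointlySmooth V) (x t : ℝ) :
    pdt (parabolicDensity ψ τ G V) x t =
      let Y := conjDeriv ψ τ V x t
      τ ^ 2 * deriv ψ x ^ 2 * (pdt G x t * V x t ^ 2 + 2 * G x t * V x t * pdt V x t) -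
        pdt G x t * Y ^ 2 - 2 * G x t * Y * (pdx (pdt V) x t + τ * deriv ψ x * pdt V x t) := by
  have hGt := hG.hasDerivAt_pdt x t
  have hVt := hV.hasDerivAt_pdt x t
  have hYt := hasDerivAt_conjDeriv_right (ψ := ψ) (τ := τ) hV x t
  exact ((hGt.neg.mul (hYt.fun_pow 2)).add (((hGt.const_mul (τ ^ 2)).mul_const
    (deriv ψ x ^ 2)).mul (hVt.fun_pow 2))).deriv.trans
      (by simp only [Pi.neg_apply]; push_cast; ring)

/-
With `Y` the conjugated derivative, `V_t - G V_xx = M₂ - M₁ + G_x Y + τ G ψ'' V`, where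
`M₂ = V_t + 2τ G ψ' Y` and `M₁` collects the symmetric terms. The divergence is the commutator
of the two parts plus `2 M₁ M₂`.
-/
lemma parabolic_divergence (hG : JointlySmooth G) (hV : JointlySmooth V)
    (hψ : ContDiff ℝ (⊤ : ℕ∞) ψ) (x t : ℝ) :
    2 * τ * deriv ψ x * parabolicFlux ψ τ G V x t + pdx (parabolicFlux ψ τ G V) x t +
        pdt (parabolicDensity ψ τ G V) x t =
      let Y := conjDeriv ψ τ V x t
      let M₂ := pdt V x t + 2 * τ * G x t * deriv ψ x * Y
      let R := pdt V x t - G x t * pdx (pdx V) x t - pdx G x t * Y -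
        τ * G x t * deriv (deriv ψ) x * V x t
      (2 * τ * deriv (deriv ψ) x * G x t ^ 2 - pdt G x t) * Y ^ 2 +
        (2 * τ ^ 3 * G x t * deriv ψ x ^ 2 *
          (3 * G x t * deriv (deriv ψ) x + 2 * pdx G x t * deriv ψ x) +
          τ ^ 2 * pdt G x t * deriv ψ x ^ 2) * V x t ^ 2 +
        2 * (M₂ - R) * M₂ := by
  rw [pdx_parabolicFlux hG hV hψ, pdt_parabolicDensity hG hV]
  simp only [parabolicFlux, conjDeriv]
  ring

lemma coercive_of_parabolic_divergence {m K G Gx Gt ψ₁ ψ₂ Y V F M : ℝ} (hm : 0 ≤ m)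
    (hY : m ≤ 2 * ψ₂ * G ^ 2) (hV : m ≤ 2 * G * ψ₁ ^ 2 * (3 * G * ψ₂ + 2 * Gx * ψ₁))
    (hKY : Gt + 3 * Gx ^ 2 ≤ K) (hKV : 3 * G ^ 2 * ψ₂ ^ 2 - Gt * ψ₁ ^ 2 ≤ K) (hK : ψ₁ ^ 2 ≤ K)
    (hτ : 0 ≤ τ) (hτK : 2 * K ≤ τ * m) :
    τ * (m / (4 * (1 + K))) * ((Y - τ * ψ₁ * V) ^ 2 + τ ^ 2 * V ^ 2) ≤
      3 * F ^ 2 + ((2 * τ * ψ₂ * G ^ 2 - Gt) * Y ^ 2 +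
        (2 * τ ^ 3 * G * ψ₁ ^ 2 * (3 * G * ψ₂ + 2 * Gx * ψ₁) + τ ^ 2 * Gt * ψ₁ ^ 2) * V ^ 2 +
        2 * (M - (F - Gx * Y - τ * G * ψ₂ * V)) * M) := by
  have hK0 : 0 ≤ K := (sq_nonneg ψ₁).trans hK
  have hresidual : (F - Gx * Y - τ * G * ψ₂ * V) ^ 2 ≤
      3 * (F ^ 2 + (Gx * Y) ^ 2 + (τ * G * ψ₂ * V) ^ 2) := by
    nlinarith [sq_nonneg (F + Gx * Y), sq_nonneg (F + τ * G * ψ₂ * V),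
      sq_nonneg (Gx * Y - τ * G * ψ₂ * V)]
  have hsum : (Y - τ * ψ₁ * V) ^ 2 + τ ^ 2 * V ^ 2 ≤ 2 * (1 + K) * (Y ^ 2 + τ ^ 2 * V ^ 2) := by
    nlinarith [sq_nonneg (Y + τ * ψ₁ * V), mul_nonneg hK0 (sq_nonneg Y), sq_nonneg (τ * V),
      mul_le_mul_of_nonneg_right hK (sq_nonneg (τ * V))]
  have hcoeffY : (τ * m / 2) * Y ^ 2 ≤ (2 * τ * ψ₂ * G ^ 2 - Gt - 3 * Gx ^ 2) * Y ^ 2 :=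
    mul_le_mul_of_nonneg_right (by nlinarith [mul_le_mul_of_nonneg_left hY hτ]) (sq_nonneg Y)
  have hcoeffV : (τ * m / 2) * (τ * V) ^ 2 ≤
      (2 * τ * G * ψ₁ ^ 2 * (3 * G * ψ₂ + 2 * Gx * ψ₁) + Gt * ψ₁ ^ 2 - 3 * G ^ 2 * ψ₂ ^ 2) *
        (τ * V) ^ 2 :=
    mul_le_mul_of_nonneg_right (by nlinarith [mul_le_mul_of_nonneg_left hV hτ]) (sq_nonneg _)
  calc τ * (m / (4 * (1 + K))) * ((Y - τ * ψ₁ * V) ^ 2 + τ ^ 2 * V ^ 2)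
      ≤ τ * (m / (4 * (1 + K))) * (2 * (1 + K) * (Y ^ 2 + τ ^ 2 * V ^ 2)) := by gcongr
    _ = (τ * m / 2) * Y ^ 2 + (τ * m / 2) * (τ * V) ^ 2 := by field_simp; ring
    _ ≤ _ := by
      nlinarith [sq_nonneg M, sq_nonneg (M - (F - Gx * Y - τ * G * ψ₂ * V))]

lemma neg_integral_parabolicFlux_le (hG : JointlySmooth G) (hV : JointlySmooth V)
    (hψ : ContDiff ℝ (⊤ : ℕ∞) ψ) (hψa : 0 ≤ deriv ψ a) (ht : t₀ ≤ t₁) (hτ : 1 ≤ τ) :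
    -∫ t in t₀..t₁, parabolicFlux ψ τ G V a t ≤
      τ * ∫ t in t₀..t₁, (|2 * G a t * pdx V a t * pdt V a t| +
        |2 * G a t * deriv ψ a * V a t * pdt V a t|) := by
  have hVx := hV.pdx
  have hVt := hV.pdt
  have hY := hV.conjDeriv (τ := τ) hψ
  rw [← intervalIntegral.integral_neg, ← intervalIntegral.integral_const_mul]
  refine intervalIntegral.integral_mono_on ht (Continuous.intervalIntegrable ?_ _ _)
    (Continuous.intervalIntegrable (by fun_prop) _ _) fun t _ => ?_
  · unfold parabolicFlux
    fun_prop
  · have hnonneg : 0 ≤ 2 * τ * deriv ψ a * G a t ^ 2 * conjDeriv ψ τ V a t ^ 2 +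
        2 * τ ^ 3 * G a t ^ 2 * deriv ψ a ^ 3 * V a t ^ 2 := by positivity
    have hVx_le := mul_le_mul_of_nonneg_right hτ
      (abs_nonneg (2 * G a t * pdx V a t * pdt V a t))
    have hV_le := mul_le_mul_of_nonneg_left
      (neg_abs_le (2 * G a t * deriv ψ a * V a t * pdt V a t)) (zero_le_one.trans hτ)
    have hVx_neg := neg_abs_le (2 * G a t * pdx V a t * pdt V a t)
    simp only [parabolicFlux] at hnonneg ⊢
    rw [show 2 * G a t * conjDeriv ψ τ V a t * pdt V a t = 2 * G a t * pdx V a t * pdt V a t +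
      τ * (2 * G a t * deriv ψ a * V a t * pdt V a t) by simp only [conjDeriv]; ring]
    linarith

end parabolicDivergence

lemma exists_le_parabolic_divergence {G V : ℝ → ℝ → ℝ} (hG : JointlySmooth G)
    (hV : JointlySmooth V) (hψ : ContDiff ℝ (⊤ : ℕ∞) ψ) (hab : a ≤ b) (ht : t₀ ≤ t₁)
    (hGpos : ∀ x ∈ Icc a b, ∀ t ∈ Icc t₀ t₁, 0 < G x t)
    (hψ' : ∀ x ∈ Icc a b, 0 < deriv ψ x) (hψ'' : ∀ x ∈ Icc a b, 0 < deriv (deriv ψ) x)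
    (hconvex : ∀ x ∈ Icc a b, ∀ t ∈ Icc t₀ t₁,
      0 < 3 * G x t * deriv (deriv ψ) x + 2 * pdx G x t * deriv ψ x) :
    ∃ m > 0, ∀ᶠ τ in atTop, ∀ x ∈ Icc a b, ∀ t ∈ Icc t₀ t₁,
      τ * m * (pdx V x t ^ 2 + τ ^ 2 * V x t ^ 2) ≤
        3 * (pdt V x t - G x t * pdx (pdx V) x t) ^ 2 +
          (2 * τ * deriv ψ x * parabolicFlux ψ τ G V x t + pdx (parabolicFlux ψ τ G V) x t +
            pdt (parabolicDensity ψ τ G V) x t) := by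
  have hψ₁ := (contDiff_infty_iff_deriv.1 hψ).2
  have hψ₂ := (contDiff_infty_iff_deriv.1 hψ₁).2
  have hGx := hG.pdx
  have hGt := hG.pdt
  obtain ⟨m, hm, hm_le⟩ := exists_pos_forall_le_of_continuous
    (f := fun x t => min (2 * deriv (deriv ψ) x * G x t ^ 2) (2 * G x t * deriv ψ x ^ 2 *
      (3 * G x t * deriv (deriv ψ) x + 2 * pdx G x t * deriv ψ x))) (by fun_prop)
    (fun x hx t ht => lt_min
      (mul_pos (mul_pos two_pos (hψ'' x hx)) (pow_pos (hGpos x hx t ht) 2))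
      (mul_pos (mul_pos (mul_pos two_pos (hGpos x hx t ht)) (pow_pos (hψ' x hx) 2))
        (hconvex x hx t ht)))
  obtain ⟨K, hK⟩ := exists_forall_le_of_continuous (a := a) (b := b) (t₀ := t₀) (t₁ := t₁)
    (f := fun x t => max (max (pdt G x t + 3 * pdx G x t ^ 2)
      (3 * G x t ^ 2 * deriv (deriv ψ) x ^ 2 - pdt G x t * deriv ψ x ^ 2)) (deriv ψ x ^ 2))
    (by fun_prop)
  simp only [le_min_iff, max_le_iff] at hm_le hK
  have hK0 : 0 ≤ K :=
    (sq_nonneg _).trans (hK a (left_mem_Icc.2 hab) t₀ (left_mem_Icc.2 ht)).2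
  refine ⟨m / (4 * (1 + K)), by positivity, ?_⟩
  filter_upwards [eventually_ge_atTop (2 * K / m), eventually_ge_atTop 0] with τ hτK hτ x hx t ht
  obtain ⟨hmY, hmV⟩ := hm_le x hx t ht
  obtain ⟨⟨hKY, hKV⟩, hKψ⟩ := hK x hx t ht
  rw [parabolic_divergence hG hV hψ,
    show pdx V x t = conjDeriv ψ τ V x t - τ * deriv ψ x * V x t by simp [conjDeriv]]
  exact coercive_of_parabolic_divergence hm.le hmY hmV hKY hKV hKψ hτ ((div_le_iff₀ hm).1 hτK)

lemma exists_carleman_parabolic {G V : ℝ → ℝ → ℝ} (hG : JointlySmooth G) (hV : JointlySmooth V)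
    (hψ : ContDiff ℝ (⊤ : ℕ∞) ψ) (hab : a ≤ b) (ht : t₀ ≤ t₁)
    (hGpos : ∀ x ∈ Icc a b, ∀ t ∈ Icc t₀ t₁, 0 < G x t)
    (hψ' : ∀ x ∈ Icc a b, 0 < deriv ψ x) (hψ'' : ∀ x ∈ Icc a b, 0 < deriv (deriv ψ) x)
    (hconvex : ∀ x ∈ Icc a b, ∀ t ∈ Icc t₀ t₁,
      0 < 3 * G x t * deriv (deriv ψ) x + 2 * pdx G x t * deriv ψ x)
    (hV₀ : ∀ x ∈ Icc a b, V x t₀ = 0 ∧ pdx V x t₀ = 0)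
    (hV₁ : ∀ x ∈ Icc a b, V x t₁ = 0 ∧ pdx V x t₁ = 0)
    (hVb : ∀ t ∈ Icc t₀ t₁, V b t = 0 ∧ pdx V b t = 0) :
    ∃ C ≥ 0, ∃ C', ∀ᶠ τ in atTop,
      τ * carlemanIntegral ψ a b t₀ t₁ τ (fun x t => pdx V x t ^ 2 + τ ^ 2 * V x t ^ 2) ≤
        C * carlemanIntegral ψ a b t₀ t₁ τ
          (fun x t => (pdt V x t - G x t * pdx (pdx V) x t) ^ 2) + C' * τ := by
  have hVx := hV.pdx
  have hVxx := hVx.pdx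
  have hVt := hV.pdt
  obtain ⟨m, hm, hcoercive⟩ :=
    exists_le_parabolic_divergence hG hV hψ hab ht hGpos hψ' hψ'' hconvex
  refine ⟨3 / m, by positivity, (∫ t in t₀..t₁, (|2 * G a t * pdx V a t * pdt V a t| +
        |2 * G a t * deriv ψ a * V a t * pdt V a t|)) / m, ?_⟩
  filter_upwards [hcoercive, eventually_ge_atTop 1] with τ hcoercive hτ
  have hY := hV.conjDeriv (τ := τ) hψ
  have hestimate := mul_carlemanIntegral_le_sub_of_le_divergence (τ := τ) (α := τ * m) (β := 3)
    (f := fun x t => pdx V x t ^ 2 + τ ^ 2 * V x t ^ 2)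
    (g := fun x t => (pdt V x t - G x t * pdx (pdx V) x t) ^ 2)
    (by unfold JointlySmooth parabolicFlux; fun_prop)
    (by unfold JointlySmooth parabolicDensity; fun_prop)
    (by fun_prop) (by fun_prop) hψ hab ht
    (fun x hx => by simp [parabolicDensity, conjDeriv, hV₀ x hx])
    (fun x hx => by simp [parabolicDensity, conjDeriv, hV₁ x hx])
    (fun t ht => by simp [parabolicFlux, conjDeriv, hVb t ht]) hcoercive
  have hflux := neg_integral_parabolicFlux_le hG hV hψ (hψ' a (left_mem_Icc.2 hab)).le ht hτ
  rw [div_mul_eq_mul_div, div_mul_eq_mul_div, ← add_div, le_div_iff₀ hm]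
  linarith

end carleman

/-! ### Unique continuation for coupled parabolic-hyperbolic systems -/

section uniqueContinuation

variable {a b t₀ t₁ : ℝ} {ψ : ℝ → ℝ}

lemma exists_carleman_phase {G : ℝ → ℝ → ℝ} (hG : JointlySmooth G)
    (hGpos : ∀ x ∈ Icc a b, ∀ t ∈ Icc t₀ t₁, 0 < G x t) :
    ∃ ψ, ContDiff ℝ (⊤ : ℕ∞) ψ ∧ (∀ x, 0 < deriv ψ x) ∧ (∀ x, 0 < deriv (deriv ψ) x) ∧
      ∀ x ∈ Icc a b, ∀ t ∈ Icc t₀ t₁,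
        0 < 3 * G x t * deriv (deriv ψ) x + 2 * pdx G x t * deriv ψ x := by
  obtain ⟨m, hm, hm_le⟩ := exists_pos_forall_le_of_continuous hG.continuous hGpos
  have hGx := hG.pdx
  obtain ⟨K, hK⟩ := exists_forall_le_of_continuous (a := a) (b := b) (t₀ := t₀) (t₁ := t₁)
    (f := fun x t => -pdx G x t) (by fun_prop)
  obtain ⟨r, hr, hrK⟩ : ∃ r > 0, K ≤ r * m :=
    ⟨max 1 (K / m), by positivity, (div_le_iff₀ hm).1 (le_max_right _ _)⟩
  have hexp (x : ℝ) : HasDerivAt (fun y => Real.exp (r * y)) (r * Real.exp (r * x)) x := by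
    simpa [mul_comm] using ((hasDerivAt_id x).const_mul r).exp
  have hderiv : deriv (fun y => Real.exp (r * y)) = fun y => r * Real.exp (r * y) :=
    funext fun x => (hexp x).deriv
  have hderiv₂ (x : ℝ) : deriv (fun y => r * Real.exp (r * y)) x = r * (r * Real.exp (r * x)) :=
    ((hexp x).const_mul r).deriv
  refine ⟨fun x => Real.exp (r * x), by fun_prop, ?_⟩
  simp only [hderiv, hderiv₂]
  refine ⟨fun x => by positivity, fun x => by positivity, fun x hx t ht => ?_⟩
  have hfactor : 0 < 3 * G x t * r + 2 * pdx G x t := by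
    nlinarith [hm_le x hx t ht, hK x hx t ht, mul_pos hr hm]
  calc 0 < (3 * G x t * r + 2 * pdx G x t) * (r * Real.exp (r * x)) := by positivity
    _ = _ := by ring

lemma eq_zero_of_setIntegral_prod_nonpos {f : ℝ → ℝ → ℝ} (hf : Continuous (uncurry f))
    (hf₀ : ∀ x t, 0 ≤ f x t) (hab : a < b) (ht : t₀ < t₁)
    (h : ∫ p in Icc a b ×ˢ Icc t₀ t₁, f p.1 p.2 ≤ 0) :
    ∀ x ∈ Icc a b, ∀ t ∈ Icc t₀ t₁, f x t = 0 := by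
  have hint : IntegrableOn (fun p : ℝ × ℝ => f p.1 p.2) (Icc a b ×ˢ Icc t₀ t₁) :=
    hf.continuousOn.integrableOn_compact (isCompact_Icc.prod isCompact_Icc)
  have hae := (setIntegral_eq_zero_iff_of_nonneg_ae
    (Eventually.of_forall fun p : ℝ × ℝ => hf₀ p.1 p.2) hint).1
      (h.antisymm (integral_nonneg fun p => hf₀ p.1 p.2))
  have heq := Measure.eqOn_of_ae_eq hae hf.continuousOn continuousOn_const (by
    rw [interior_prod_eq, interior_Icc, interior_Icc, closure_prod_eq, closure_Ioo hab.ne,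
      closure_Ioo ht.ne])
  exact fun x hx t ht => heq (x := (x, t)) ⟨hx, ht⟩

lemma exp_mul_setIntegral_le_carlemanIntegral {f : ℝ → ℝ → ℝ} {τ y : ℝ}
    (hf : Continuous (uncurry f)) (hf₀ : ∀ x t, 0 ≤ f x t) (hψ : ContDiff ℝ (⊤ : ℕ∞) ψ)
    (hmono : Monotone ψ) (hy : a ≤ y) (hτ : 0 ≤ τ) :
    Real.exp (2 * τ * (ψ y - ψ a)) * ∫ p in Icc y b ×ˢ Icc t₀ t₁, f p.1 p.2 ≤
      carlemanIntegral ψ a b t₀ t₁ τ f := by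
  have hcompact : IsCompact (Icc y b ×ˢ Icc t₀ t₁) := isCompact_Icc.prod isCompact_Icc
  have hsubset : Icc y b ×ˢ Icc t₀ t₁ ⊆ Icc a b ×ˢ Icc t₀ t₁ :=
    prod_mono (Icc_subset_Icc_left hy) subset_rfl
  have hint := integrableOn_carlemanWeight_mul (τ := τ) (a := a) (b := b) (t₀ := t₀) (t₁ := t₁)
    hψ hf
  rw [← integral_const_mul]
  calc ∫ p in Icc y b ×ˢ Icc t₀ t₁, Real.exp (2 * τ * (ψ y - ψ a)) * f p.1 p.2
      ≤ ∫ p in Icc y b ×ˢ Icc t₀ t₁, carlemanWeight ψ τ a p.1 * f p.1 p.2 :=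
        setIntegral_mono_on ((by fun_prop : Continuous fun p : ℝ × ℝ =>
          Real.exp (2 * τ * (ψ y - ψ a)) * f p.1 p.2).continuousOn.integrableOn_compact hcompact)
          (hint.mono_set hsubset) hcompact.measurableSet fun p hp => by
            have := hmono hp.1.1
            unfold carlemanWeight
            gcongr
            exact hf₀ _ _
    _ ≤ _ := setIntegral_mono_set hint
        (Eventually.of_forall fun p => mul_nonneg (carlemanWeight_pos _).le (hf₀ _ _))
        hsubset.eventuallyLE

lemma eq_zero_of_eventually_carlemanIntegral_le {f : ℝ → ℝ → ℝ} {C : ℝ}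
    (hf : Continuous (uncurry f)) (hf₀ : ∀ x t, 0 ≤ f x t) (hψ : ContDiff ℝ (⊤ : ℕ∞) ψ)
    (hmono : StrictMono ψ) (ht : t₀ < t₁)
    (hC : ∀ᶠ τ in atTop, carlemanIntegral ψ a b t₀ t₁ τ f ≤ C) :
    ∀ x ∈ Ioo a b, ∀ t ∈ Icc t₀ t₁, f x t = 0 := by
  intro x hx
  obtain ⟨y, hay, hyx⟩ := exists_between hx.1
  refine eq_zero_of_setIntegral_prod_nonpos hf hf₀ (hyx.trans hx.2) ht ?_ x ⟨hyx.le, hx.2.le⟩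
  by_contra! hpos
  have hgrowth : Tendsto (fun τ => Real.exp (2 * τ * (ψ y - ψ a)) *
      ∫ p in Icc y b ×ˢ Icc t₀ t₁, f p.1 p.2) atTop atTop :=
    (Real.tendsto_exp_atTop.comp ((tendsto_id.const_mul_atTop two_pos).atTop_mul_const
      (sub_pos.2 (hmono hay)))).atTop_mul_const hpos
  obtain ⟨τ, hgt, hle, hτ⟩ :=
    ((hgrowth.eventually_gt_atTop C).and (hC.and (eventually_ge_atTop 0))).exists
  exact hgt.not_ge ((exp_mul_setIntegral_le_carlemanIntegral hf hf₀ hψ hmono.monotone hay.le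
    hτ).trans hle)

variable {ι : Type*} [Fintype ι] {V G : ℝ → ℝ → ℝ} {w μ : ι → ℝ → ℝ → ℝ}

/-- The pointwise size of a coupled state: a parabolic unknown `V`, measured with its space
derivative, and a family `w` of transported unknowns. -/
noncomputable def coupledSq (V : ℝ → ℝ → ℝ) (w : ι → ℝ → ℝ → ℝ) (x t : ℝ) : ℝ :=
  pdx V x t ^ 2 + V x t ^ 2 + ∑ i, w i x t ^ 2

lemma coupledSq_nonneg (x t : ℝ) : 0 ≤ coupledSq V w x t := by
  unfold coupledSq; positivity

lemma coupledSq_eq_zero_iff {x t : ℝ} :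
    coupledSq V w x t = 0 ↔ pdx V x t = 0 ∧ V x t = 0 ∧ ∀ i, w i x t = 0 := by
  have hsum : 0 ≤ ∑ i, w i x t ^ 2 := Finset.sum_nonneg fun i _ => sq_nonneg _
  rw [coupledSq, add_eq_zero_iff_of_nonneg (by positivity) hsum,
    add_eq_zero_iff_of_nonneg (sq_nonneg _) (sq_nonneg _), sq_eq_zero_iff, sq_eq_zero_iff,
    Finset.sum_eq_zero_iff_of_nonneg fun i _ => sq_nonneg _]
  simp [and_assoc]

lemma continuous_coupledSq (hV : JointlySmooth V) (hw : ∀ i, JointlySmooth (w i)) :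
    Continuous (uncurry (coupledSq V w)) := by
  have hVx := hV.pdx
  have hsum : Continuous fun p : ℝ × ℝ => ∑ i, w i p.1 p.2 ^ 2 :=
    continuous_finsetSum _ fun i _ => (hw i).continuous.pow 2
  unfold coupledSq
  fun_prop

lemma carlemanIntegral_coupledSq {τ : ℝ} (hV : JointlySmooth V) (hw : ∀ i, JointlySmooth (w i))
    (hψ : ContDiff ℝ (⊤ : ℕ∞) ψ) :
    carlemanIntegral ψ a b t₀ t₁ τ (coupledSq V w) =
      carlemanIntegral ψ a b t₀ t₁ τ (fun x t => pdx V x t ^ 2 + V x t ^ 2) +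
        ∑ i, carlemanIntegral ψ a b t₀ t₁ τ (fun x t => w i x t ^ 2) := by
  have hVx := hV.pdx
  have hw_sq (i : ι) : Continuous (uncurry fun x t => w i x t ^ 2) := (hw i).continuous.pow 2
  rw [← carlemanIntegral_sum hψ hw_sq]
  exact carlemanIntegral_add hψ (by fun_prop) (continuous_finsetSum _ fun i _ => hw_sq i)

lemma exists_eventually_carlemanIntegral_coupledSq_le (hV : JointlySmooth V)
    (hG : JointlySmooth G) (hw : ∀ i, JointlySmooth (w i)) (hμ : ∀ i, JointlySmooth (μ i))
    (hψ : ContDiff ℝ (⊤ : ℕ∞) ψ)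
    (hVN : ∃ K, ∀ x ∈ Icc a b, ∀ t ∈ Icc t₀ t₁,
      (pdt V x t - G x t * pdx (pdx V) x t) ^ 2 ≤ K * coupledSq V w x t)
    (hwN : ∀ i, ∃ K, ∀ x ∈ Icc a b, ∀ t ∈ Icc t₀ t₁,
      (pdt (w i) x t + μ i x t * pdx (w i) x t) ^ 2 ≤ K * coupledSq V w x t)
    (hcarlemanV : ∃ C ≥ 0, ∃ C', ∀ᶠ τ in atTop,
      τ * carlemanIntegral ψ a b t₀ t₁ τ (fun x t => pdx V x t ^ 2 + τ ^ 2 * V x t ^ 2) ≤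
        C * carlemanIntegral ψ a b t₀ t₁ τ
          (fun x t => (pdt V x t - G x t * pdx (pdx V) x t) ^ 2) + C' * τ)
    (hcarlemanw : ∀ i, ∃ C ≥ 0, ∀ᶠ τ in atTop,
      τ * carlemanIntegral ψ a b t₀ t₁ τ (fun x t => w i x t ^ 2) ≤
        C * carlemanIntegral ψ a b t₀ t₁ τ
          (fun x t => (pdt (w i) x t + μ i x t * pdx (w i) x t) ^ 2)) :
    ∃ C, ∀ᶠ τ in atTop, carlemanIntegral ψ a b t₀ t₁ τ (coupledSq V w) ≤ C := by
  have hVx := hV.pdx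
  have hVxx := hVx.pdx
  have hVt := hV.pdt
  have hN := continuous_coupledSq hV hw
  obtain ⟨K, hVK⟩ := hVN
  choose L hwL using hwN
  obtain ⟨C, hC, C', hV_le⟩ := hcarlemanV
  choose D hD hw_le using hcarlemanw
  refine ⟨2 * C', ?_⟩
  filter_upwards [hV_le, eventually_all.2 hw_le, eventually_ge_atTop 1,
    eventually_ge_atTop (2 * (C * K + ∑ i, D i * L i))] with τ hV_le hw_le hτ hτK
  set N := carlemanIntegral ψ a b t₀ t₁ τ (coupledSq V w) with hNdef
  have hN₀ : 0 ≤ N := setIntegral_nonneg (measurableSet_Icc.prod measurableSet_Icc) fun p _ =>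
    mul_nonneg (carlemanWeight_pos _).le (coupledSq_nonneg _ _)
  have hparabolic : τ * carlemanIntegral ψ a b t₀ t₁ τ (fun x t => pdx V x t ^ 2 + V x t ^ 2) ≤
      C * (K * N) + C' * τ :=
    calc _ ≤ τ * carlemanIntegral ψ a b t₀ t₁ τ (fun x t => pdx V x t ^ 2 + τ ^ 2 * V x t ^ 2) := by
          gcongr
          exact carlemanIntegral_mono hψ (by fun_prop) (by fun_prop) fun x _ t _ =>
            add_le_add le_rfl (le_mul_of_one_le_left (sq_nonneg _) (one_le_pow₀ hτ))
      _ ≤ _ := hV_le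
      _ ≤ _ := by
          gcongr
          exact carlemanIntegral_le_const_mul hψ (by fun_prop) hN hVK
  have htransport (i : ι) : τ * carlemanIntegral ψ a b t₀ t₁ τ (fun x t => w i x t ^ 2) ≤
      D i * L i * N := by
    have hwi := hw i
    have hμi := hμ i
    have hwix := hwi.pdx
    have hwit := hwi.pdt
    exact mul_assoc (D i) _ N ▸ (hw_le i).trans (mul_le_mul_of_nonneg_left
      (carlemanIntegral_le_const_mul hψ (by fun_prop) hN (hwL i)) (hD i))
  have htotal : τ * N ≤ (C * K + ∑ i, D i * L i) * N + C' * τ := by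
    have hsum := Finset.sum_le_sum fun i (_ : i ∈ Finset.univ) => htransport i
    rw [← Finset.mul_sum, ← Finset.sum_mul] at hsum
    rw [hNdef, carlemanIntegral_coupledSq hV hw hψ, mul_add, ← carlemanIntegral_coupledSq hV hw hψ]
    linarith
  have habsorb := mul_le_mul_of_nonneg_right hτK hN₀
  exact le_of_mul_le_mul_left (by linarith : τ * N ≤ τ * (2 * C')) (by positivity)

theorem coupledSq_eq_zero_of_vanish_on_boundary {σ : ℝ} (hV : JointlySmooth V)
    (hG : JointlySmooth G) (hw : ∀ i, JointlySmooth (w i)) (hμ : ∀ i, JointlySmooth (μ i))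
    (hab : a ≤ b) (ht : t₀ < t₁)
    (hGpos : ∀ x ∈ Icc a b, ∀ t ∈ Icc t₀ t₁, 0 < G x t)
    (hσμ : ∀ i, ∀ x ∈ Icc a b, ∀ t ∈ Icc t₀ t₁, 0 < σ * μ i x t)
    (hVN : ∃ K, ∀ x ∈ Icc a b, ∀ t ∈ Icc t₀ t₁,
      (pdt V x t - G x t * pdx (pdx V) x t) ^ 2 ≤ K * coupledSq V w x t)
    (hwN : ∀ i, ∃ K, ∀ x ∈ Icc a b, ∀ t ∈ Icc t₀ t₁,
      (pdt (w i) x t + μ i x t * pdx (w i) x t) ^ 2 ≤ K * coupledSq V w x t)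
    (h₀ : ∀ x ∈ Icc a b, coupledSq V w x t₀ = 0) (h₁ : ∀ x ∈ Icc a b, coupledSq V w x t₁ = 0)
    (hb : ∀ t ∈ Icc t₀ t₁, coupledSq V w b t = 0) :
    ∀ x ∈ Ioo a b, ∀ t ∈ Icc t₀ t₁, coupledSq V w x t = 0 := by
  obtain ⟨ψ, hψ, hψ', hψ'', hconvex⟩ := exists_carleman_phase hG hGpos
  simp only [coupledSq_eq_zero_iff] at h₀ h₁ hb
  obtain ⟨C, hC⟩ := exists_eventually_carlemanIntegral_coupledSq_le hV hG hw hμ hψ hVN hwN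
    (exists_carleman_parabolic hG hV hψ hab ht.le hGpos (fun x _ => hψ' x) (fun x _ => hψ'' x)
      hconvex (fun x hx => ⟨(h₀ x hx).2.1, (h₀ x hx).1⟩)
      (fun x hx => ⟨(h₁ x hx).2.1, (h₁ x hx).1⟩) (fun t ht => ⟨(hb t ht).2.1, (hb t ht).1⟩))
    (fun i => exists_carleman_transport (hw i) (hμ i) hψ hab ht.le (hσμ i) (fun x _ => hψ' x)
      (fun x hx => (h₀ x hx).2.2 i) (fun x hx => (h₁ x hx).2.2 i) (fun t ht => (hb t ht).2.2 i))
  exact eq_zero_of_eventually_carlemanIntegral_le (continuous_coupledSq hV hw) coupledSq_nonneg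
    hψ (strictMono_of_deriv_pos hψ') ht hC

lemma exists_forall_sq_add_sum_le {α₀ α₁ : ℝ → ℝ → ℝ} {β : ι → ℝ → ℝ → ℝ}
    (hα₀ : Continuous (uncurry α₀)) (hα₁ : Continuous (uncurry α₁))
    (hβ : ∀ i, Continuous (uncurry (β i))) :
    ∃ K, ∀ x ∈ Icc a b, ∀ t ∈ Icc t₀ t₁,
      (α₁ x t * pdx V x t + α₀ x t * V x t + ∑ i, β i x t * w i x t) ^ 2 ≤
        K * coupledSq V w x t := by
  have hsum : Continuous fun p : ℝ × ℝ => ∑ i, β i p.1 p.2 ^ 2 :=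
    continuous_finsetSum _ fun i _ => (hβ i).pow 2
  obtain ⟨K, hK⟩ := exists_forall_le_of_continuous (a := a) (b := b) (t₀ := t₀) (t₁ := t₁)
    (f := fun x t => 3 * (α₁ x t ^ 2 + α₀ x t ^ 2 + ∑ i, β i x t ^ 2)) (by fun_prop)
  refine ⟨K, fun x hx t ht => ?_⟩
  refine le_trans ?_ (mul_le_mul_of_nonneg_right (hK x hx t ht) (coupledSq_nonneg x t))
  have hcauchy := Finset.sum_mul_sq_le_sq_mul_sq Finset.univ (fun i => β i x t) (fun i => w i x t)
  have hβ₀ : 0 ≤ ∑ i, β i x t ^ 2 := Finset.sum_nonneg fun i _ => sq_nonneg _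
  have hw₀ : 0 ≤ ∑ i, w i x t ^ 2 := Finset.sum_nonneg fun i _ => sq_nonneg _
  unfold coupledSq
  generalize ∑ i, β i x t * w i x t = S at *
  generalize ∑ i, β i x t ^ 2 = B at *
  generalize ∑ i, w i x t ^ 2 = W at *
  have hthree : (α₁ x t * pdx V x t + α₀ x t * V x t + S) ^ 2 ≤
      3 * ((α₁ x t * pdx V x t) ^ 2 + (α₀ x t * V x t) ^ 2 + S ^ 2) := by
    nlinarith [sq_nonneg (α₁ x t * pdx V x t - α₀ x t * V x t),
      sq_nonneg (α₁ x t * pdx V x t - S), sq_nonneg (α₀ x t * V x t - S)]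
  have hcross : 0 ≤ α₁ x t ^ 2 * (V x t ^ 2 + W) + α₀ x t ^ 2 * (pdx V x t ^ 2 + W) +
      B * (pdx V x t ^ 2 + V x t ^ 2) := by positivity
  linarith

end uniqueContinuation

/-! ### The coupled system in a moving frame -/

/-- The flux `g(θ) u_x + h(θ) θ_t` of the heat equation. -/
noncomputable def heatFlux (g h : ℝ → ℝ) (u θ : ℝ → ℝ → ℝ) (x t : ℝ) : ℝ :=
  g (θ x t) * pdx u x t + h (θ x t) * pdt θ x t

/-- The quantity `c(θ) θ_x`, which together with `θ_t` diagonalizes the wave operator. -/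
noncomputable def waveStress (c : ℝ → ℝ) (θ : ℝ → ℝ → ℝ) (x t : ℝ) : ℝ :=
  c (θ x t) * pdx θ x t

/-- A smooth pair `(u, θ)` solving the heat-wave system for `t ≥ 0`, with smooth coefficients. -/
structure IsSmoothSolution (γ₁ : ℝ) (g h c : ℝ → ℝ) (u θ : ℝ → ℝ → ℝ) : Prop where
  smooth_g : ContDiff ℝ (⊤ : ℕ∞) g
  smooth_h : ContDiff ℝ (⊤ : ℕ∞) h
  smooth_c : ContDiff ℝ (⊤ : ℕ∞) c
  g_pos : ∀ s, 0 < g s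
  c_pos : ∀ s, 0 < c s
  smooth_u : JointlySmooth u
  smooth_θ : JointlySmooth θ
  heat : ∀ x t, 0 ≤ t → pdt u x t = pdx (heatFlux g h u θ) x t
  wave : ∀ x t, 0 ≤ t → pdt (pdt θ) x t + γ₁ * pdt θ x t =
    c (θ x t) * pdx (waveStress c θ) x t - h (θ x t) * pdx u x t

/-- The solution agrees at `(x, t)`, to the order entering the energy, with a constant director
field and a fluid at rest. -/
def AtRest (u θ : ℝ → ℝ → ℝ) (x t : ℝ) : Prop := u x t = 0 ∧ pdx θ x t = 0 ∧ pdt θ x t = 0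

/-- The solution is at rest at time `t` everywhere on `[R, ∞)`. -/
def AtRestBeyond (u θ : ℝ → ℝ → ℝ) (R t : ℝ) : Prop := ∀ x, R ≤ x → AtRest u θ x t

section atRest

variable {u θ : ℝ → ℝ → ℝ} {R R' x y t : ℝ}

lemma AtRestBeyond.mono (hR : AtRestBeyond u θ R t) (h : R ≤ R') : AtRestBeyond u θ R' t :=
  fun x hx => hR x (h.trans hx)

lemma isClosed_setOf_atRest (hu : JointlySmooth u) (hθ : JointlySmooth θ) :
    IsClosed {p : ℝ × ℝ | AtRest u θ p.1 p.2} :=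
  (isClosed_eq hu.continuous continuous_const).inter
    ((isClosed_eq hθ.pdx.continuous continuous_const).inter
      (isClosed_eq hθ.pdt.continuous continuous_const))

lemma atRestBeyond_of_forall_lt (hu : JointlySmooth u) (hθ : JointlySmooth θ)
    (h : ∀ x, R < x → AtRest u θ x t) : AtRestBeyond u θ R t := by
  have hclosed : IsClosed {x | AtRest u θ x t} :=
    (isClosed_setOf_atRest hu hθ).preimage (by fun_prop : Continuous fun x : ℝ => (x, t))
  have hsubset := hclosed.closure_subset_iff.2 (show Ioi R ⊆ _ from h)
  rw [closure_Ioi] at hsubset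
  exact hsubset

lemma AtRestBeyond.eq_of_le (hθ : JointlySmooth θ) (hR : AtRestBeyond u θ R t) (hx : R ≤ x)
    (hy : R ≤ y) : θ x t = θ y t := by
  refine (convex_Ici R).is_const_of_fderivWithin_eq_zero (𝕜 := ℝ) (f := fun x => θ x t)
    (fun z _ => (hθ.hasDerivAt_pdx z t).differentiableAt.differentiableWithinAt)
    (fun z hz => ?_) hx hy
  have hderiv := (hθ.hasDerivAt_pdx z t).hasDerivWithinAt (s := Ici R)
  rw [(hR z hz).2.1] at hderiv
  rw [hderiv.hasFDerivWithinAt.fderivWithin ((uniqueDiffOn_Ici R) z hz)]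
  simp

lemma eq_of_forall_atRest {t₀ t₁ : ℝ} (hθ : JointlySmooth θ)
    (h : ∀ t ∈ Icc t₀ t₁, AtRest u θ x t) {s t : ℝ} (hs : s ∈ Icc t₀ t₁) (ht : t ∈ Icc t₀ t₁) :
    θ x s = θ x t := by
  have hconst : ∀ t ∈ Icc t₀ t₁, θ x t = θ x t₀ := constant_of_has_deriv_right_zero
    (fun t _ => (hθ.hasDerivAt_pdt x t).continuousAt.continuousWithinAt) fun t ht =>
      (h t (Ico_subset_Icc_self ht)).2.2 ▸ (hθ.hasDerivAt_pdt x t).hasDerivWithinAt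
  rw [hconst s hs, hconst t ht]

lemma AtRestBeyond.pdx_eq_zero (hR : AtRestBeyond u θ R t) (hx : R < x) : pdx u x t = 0 := by
  have hzero : (fun y => u y t) =ᶠ[𝓝 x] fun _ => 0 := by
    filter_upwards [Ioi_mem_nhds hx] with y hy using (hR y (le_of_lt hy)).1
  exact hzero.deriv_eq.trans (deriv_const x 0)

end atRest

namespace IsSmoothSolution

variable {γ₁ : ℝ} {g h c : ℝ → ℝ} {u θ : ℝ → ℝ → ℝ}

lemma smooth_heatFlux (H : IsSmoothSolution γ₁ g h c u θ) :
    JointlySmooth (heatFlux g h u θ) :=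
  ((H.smooth_g.comp H.smooth_θ).mul H.smooth_u.pdx).add
    ((H.smooth_h.comp H.smooth_θ).mul H.smooth_θ.pdt)

lemma smooth_waveStress (H : IsSmoothSolution γ₁ g h c u θ) : JointlySmooth (waveStress c θ) :=
  (H.smooth_c.comp H.smooth_θ).mul H.smooth_θ.pdx

end IsSmoothSolution

/-- The derivative along the trajectories `X - κ t = const`, in the moving frame. -/
noncomputable def convectiveDeriv (κ : ℝ → ℝ) (f : ℝ → ℝ → ℝ) (X t : ℝ) : ℝ :=
  pdt f X t + deriv κ t * pdx f X t

section convectiveDeriv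

variable {κ : ℝ → ℝ} {f f₁ f₂ : ℝ → ℝ → ℝ}

lemma convectiveDeriv_movingFrame (hκ : Differentiable ℝ κ) (hf : JointlySmooth f) (X t : ℝ) :
    convectiveDeriv κ (movingFrame κ f) X t = movingFrame κ (pdt f) X t := by
  rw [convectiveDeriv, pdt_movingFrame hκ hf, pdx_movingFrame]
  ring

lemma JointlySmooth.mul (hf₁ : JointlySmooth f₁) (hf₂ : JointlySmooth f₂) :
    JointlySmooth fun x t => f₁ x t * f₂ x t :=
  ContDiff.mul hf₁ hf₂

lemma pdx_add (hf₁ : JointlySmooth f₁) (hf₂ : JointlySmooth f₂) (X t : ℝ) :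
    pdx (fun x t => f₁ x t + f₂ x t) X t = pdx f₁ X t + pdx f₂ X t :=
  ((hf₁.hasDerivAt_pdx X t).add (hf₂.hasDerivAt_pdx X t)).deriv

lemma pdx_mul (hf₁ : JointlySmooth f₁) (hf₂ : JointlySmooth f₂) (X t : ℝ) :
    pdx (fun x t => f₁ x t * f₂ x t) X t = pdx f₁ X t * f₂ X t + f₁ X t * pdx f₂ X t :=
  ((hf₁.hasDerivAt_pdx X t).mul (hf₂.hasDerivAt_pdx X t)).deriv

lemma pdx_const_mul (r : ℝ) (hf : JointlySmooth f) (X t : ℝ) :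
    pdx (fun x t => r * f x t) X t = r * pdx f X t :=
  ((hf.hasDerivAt_pdx X t).const_mul r).deriv

lemma convectiveDeriv_add (hf₁ : JointlySmooth f₁) (hf₂ : JointlySmooth f₂) (X t : ℝ) :
    convectiveDeriv κ (fun x t => f₁ x t + f₂ x t) X t =
      convectiveDeriv κ f₁ X t + convectiveDeriv κ f₂ X t := by
  have hpdt : pdt (fun x t => f₁ x t + f₂ x t) X t = pdt f₁ X t + pdt f₂ X t :=
    ((hf₁.hasDerivAt_pdt X t).add (hf₂.hasDerivAt_pdt X t)).deriv
  rw [convectiveDeriv, hpdt, pdx_add hf₁ hf₂]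
  simp only [convectiveDeriv]
  ring

lemma convectiveDeriv_mul (hf₁ : JointlySmooth f₁) (hf₂ : JointlySmooth f₂) (X t : ℝ) :
    convectiveDeriv κ (fun x t => f₁ x t * f₂ x t) X t =
      convectiveDeriv κ f₁ X t * f₂ X t + f₁ X t * convectiveDeriv κ f₂ X t := by
  have hpdt : pdt (fun x t => f₁ x t * f₂ x t) X t = pdt f₁ X t * f₂ X t + f₁ X t * pdt f₂ X t :=
    ((hf₁.hasDerivAt_pdt X t).mul (hf₂.hasDerivAt_pdt X t)).deriv
  rw [convectiveDeriv, hpdt, pdx_mul hf₁ hf₂]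
  simp only [convectiveDeriv]
  ring

lemma convectiveDeriv_const_mul (r : ℝ) (hf : JointlySmooth f) (X t : ℝ) :
    convectiveDeriv κ (fun x t => r * f x t) X t = r * convectiveDeriv κ f X t := by
  have hpdt : pdt (fun x t => r * f x t) X t = r * pdt f X t :=
    ((hf.hasDerivAt_pdt X t).const_mul r).deriv
  rw [convectiveDeriv, hpdt, pdx_const_mul r hf]
  simp only [convectiveDeriv]
  ring

end convectiveDeriv

/-- The logarithmic time derivative `c(θ)_t / c(θ)` of the wave speed. -/
noncomputable def waveSpeedRate (c : ℝ → ℝ) (θ : ℝ → ℝ → ℝ) (x t : ℝ) : ℝ :=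
  deriv c (θ x t) * pdt θ x t / c (θ x t)

/-- The primitive in space of the velocity `u`, in the moving frame. -/
noncomputable def velocityPotential (κ : ℝ → ℝ) (b : ℝ) (u : ℝ → ℝ → ℝ) : ℝ → ℝ → ℝ :=
  spacePrimitive b (movingFrame κ u)

/-- The ratio `h(θ) / g(θ)`. -/
noncomputable def couplingRatio (g h : ℝ → ℝ) (θ : ℝ → ℝ → ℝ) (x t : ℝ) : ℝ :=
  h (θ x t) / g (θ x t)

/-- The combination `θ_t + (h/g) V`, where `V` is the velocity potential, in the moving frame.
Its equation contains no derivative of `u`. -/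
noncomputable def effectiveVelocity (κ : ℝ → ℝ) (b : ℝ) (g h : ℝ → ℝ) (u θ : ℝ → ℝ → ℝ)
    (X t : ℝ) : ℝ :=
  movingFrame κ (pdt θ) X t + movingFrame κ (couplingRatio g h θ) X t * velocityPotential κ b u X t

/-- The signs of the two characteristic families of the wave operator. -/
def characteristicSign : Fin 2 → ℝ := ![1, -1]

/-- The Riemann invariants `θ_t + (h/g) V ± c(θ) θ_x`, in the moving frame. -/
noncomputable def riemannInvariant (κ : ℝ → ℝ) (b : ℝ) (g h c : ℝ → ℝ) (u θ : ℝ → ℝ → ℝ)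
    (i : Fin 2) (X t : ℝ) : ℝ :=
  effectiveVelocity κ b g h u θ X t + characteristicSign i * movingFrame κ (waveStress c θ) X t

/-- The characteristic speeds of the wave operator, in the moving frame. -/
noncomputable def characteristicSpeed (κ c : ℝ → ℝ) (θ : ℝ → ℝ → ℝ) (i : Fin 2) (X t : ℝ) : ℝ :=
  deriv κ t - characteristicSign i * c (movingFrame κ θ X t)

lemma characteristicSign_sq (i : Fin 2) : characteristicSign i ^ 2 = 1 := by
  fin_cases i <;> simp [characteristicSign]

namespace IsSmoothSolution

variable {γ₁ b X t : ℝ} {κ g h c : ℝ → ℝ} {u θ : ℝ → ℝ → ℝ}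

lemma smooth_couplingRatio (H : IsSmoothSolution γ₁ g h c u θ) :
    JointlySmooth (couplingRatio g h θ) :=
  (H.smooth_h.comp H.smooth_θ).div (H.smooth_g.comp H.smooth_θ) fun _ => (H.g_pos _).ne'

lemma smooth_velocityPotential (H : IsSmoothSolution γ₁ g h c u θ)
    (hκ : ContDiff ℝ (⊤ : ℕ∞) κ) : JointlySmooth (velocityPotential κ b u) :=
  (H.smooth_u.movingFrame hκ).spacePrimitive

lemma smooth_effectiveVelocity (H : IsSmoothSolution γ₁ g h c u θ)
    (hκ : ContDiff ℝ (⊤ : ℕ∞) κ) : JointlySmooth (effectiveVelocity κ b g h u θ) :=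
  (H.smooth_θ.pdt.movingFrame hκ).add
    ((H.smooth_couplingRatio.movingFrame hκ).mul (H.smooth_velocityPotential hκ))

lemma smooth_riemannInvariant (H : IsSmoothSolution γ₁ g h c u θ)
    (hκ : ContDiff ℝ (⊤ : ℕ∞) κ) (i : Fin 2) :
    JointlySmooth (riemannInvariant κ b g h c u θ i) :=
  (H.smooth_effectiveVelocity hκ).add
    (contDiff_const.mul (H.smooth_waveStress.movingFrame hκ))

lemma smooth_characteristicSpeed (H : IsSmoothSolution γ₁ g h c u θ)
    (hκ : ContDiff ℝ (⊤ : ℕ∞) κ) (i : Fin 2) : JointlySmooth (characteristicSpeed κ c θ i) :=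
  ((contDiff_infty_iff_deriv.1 hκ).2.comp contDiff_snd).sub
    (contDiff_const.mul (H.smooth_c.comp (H.smooth_θ.movingFrame hκ)))

lemma pdx_velocityPotential (H : IsSmoothSolution γ₁ g h c u θ)
    (hκ : ContDiff ℝ (⊤ : ℕ∞) κ) (X t : ℝ) :
    pdx (velocityPotential κ b u) X t = movingFrame κ u X t :=
  pdx_spacePrimitive (H.smooth_u.movingFrame hκ) X t

lemma pdt_velocityPotential (H : IsSmoothSolution γ₁ g h c u θ) (hκ : ContDiff ℝ (⊤ : ℕ∞) κ)
    {R : ℝ} (hR : AtRestBeyond u θ R t) (hb : R < b - κ t) (ht : 0 ≤ t) :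
    pdt (velocityPotential κ b u) X t =
      movingFrame κ (heatFlux g h u θ) X t - deriv κ t * movingFrame κ u X t := by
  have hflux := H.smooth_heatFlux.movingFrame hκ
  have hũ := H.smooth_u.movingFrame hκ
  have hb_rest := hR _ hb.le
  have hflux_b : heatFlux g h u θ (b - κ t) t = 0 := by
    simp only [heatFlux, hR.pdx_eq_zero hb, hb_rest.2.2, mul_zero, add_zero]
  have hpdt (y : ℝ) : pdt (movingFrame κ u) y t = pdx (movingFrame κ (heatFlux g h u θ)) y t -
      deriv κ t * pdx (movingFrame κ u) y t := by
    rw [pdt_movingFrame (hκ.differentiable (by simp)) H.smooth_u, pdx_movingFrame, pdx_movingFrame,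
      movingFrame, H.heat _ _ ht]
    rfl
  have hftc := intervalIntegral.integral_eq_sub_of_hasDerivAt (a := b) (b := X)
    (fun y _ => (hflux.hasDerivAt_pdx y t).sub ((hũ.hasDerivAt_pdx y t).const_mul (deriv κ t)))
    (((hflux.pdx.continuous_left t).sub
      (continuous_const.mul (hũ.pdx.continuous_left t))).intervalIntegrable _ _)
  rw [velocityPotential, pdt_spacePrimitive hũ, spacePrimitive]
  simp only [hpdt, hftc]
  simp [movingFrame, hflux_b, hb_rest.1]

lemma convectiveDeriv_velocityPotential (H : IsSmoothSolution γ₁ g h c u θ)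
    (hκ : ContDiff ℝ (⊤ : ℕ∞) κ) {R : ℝ} (hR : AtRestBeyond u θ R t) (hb : R < b - κ t)
    (ht : 0 ≤ t) : convectiveDeriv κ (velocityPotential κ b u) X t =
      movingFrame κ (heatFlux g h u θ) X t := by
  rw [convectiveDeriv, H.pdt_velocityPotential hκ hR hb ht, H.pdx_velocityPotential hκ]
  ring

lemma pdt_sub_mul_pdx_pdx_velocityPotential (H : IsSmoothSolution γ₁ g h c u θ)
    (hκ : ContDiff ℝ (⊤ : ℕ∞) κ) {R : ℝ} (hR : AtRestBeyond u θ R t) (hb : R < b - κ t)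
    (ht : 0 ≤ t) :
    pdt (velocityPotential κ b u) X t -
        g (movingFrame κ θ X t) * pdx (pdx (velocityPotential κ b u)) X t =
      h (movingFrame κ θ X t) * movingFrame κ (pdt θ) X t -
        deriv κ t * pdx (velocityPotential κ b u) X t := by
  have hpdx : pdx (velocityPotential κ b u) = movingFrame κ u :=
    funext₂ (H.pdx_velocityPotential hκ)
  rw [H.pdt_velocityPotential hκ hR hb ht, hpdx, pdx_movingFrame]
  simp only [movingFrame, heatFlux]
  ring

lemma convectiveDeriv_effectiveVelocity (H : IsSmoothSolution γ₁ g h c u θ)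
    (hκ : ContDiff ℝ (⊤ : ℕ∞) κ) {R : ℝ} (hR : AtRestBeyond u θ R t) (hb : R < b - κ t)
    (ht : 0 ≤ t) :
    convectiveDeriv κ (effectiveVelocity κ b g h u θ) X t =
      c (movingFrame κ θ X t) * pdx (movingFrame κ (waveStress c θ)) X t +
        movingFrame κ (pdt (couplingRatio g h θ)) X t * velocityPotential κ b u X t +
        (movingFrame κ (couplingRatio g h θ) X t * h (movingFrame κ θ X t) - γ₁) *
          movingFrame κ (pdt θ) X t := by
  have hκ' := hκ.differentiable (by simp)
  have hratio := H.smooth_couplingRatio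
  have hV := H.smooth_velocityPotential hκ (b := b)
  have hD : convectiveDeriv κ (effectiveVelocity κ b g h u θ) X t = _ :=
    convectiveDeriv_add (H.smooth_θ.pdt.movingFrame hκ) ((hratio.movingFrame hκ).mul hV) X t
  rw [hD, convectiveDeriv_mul (hratio.movingFrame hκ) hV,
    convectiveDeriv_movingFrame hκ' H.smooth_θ.pdt, convectiveDeriv_movingFrame hκ' hratio,
    H.convectiveDeriv_velocityPotential hκ hR hb ht, pdx_movingFrame]
  have hg := (H.g_pos (θ (X - κ t) t)).ne'
  have hwave := H.wave (X - κ t) t ht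
  simp only [movingFrame, heatFlux, couplingRatio] at hwave ⊢
  field_simp
  linear_combination g (θ (X - κ t) t) * hwave

lemma pdt_waveStress (H : IsSmoothSolution γ₁ g h c u θ) (x t : ℝ) :
    pdt (waveStress c θ) x t = c (θ x t) * pdx (pdt θ) x t +
      deriv c (θ x t) * pdt θ x t * pdx θ x t := by
  have hc := ((H.smooth_c.differentiable (by simp) (θ x t)).hasDerivAt.comp t
    (H.smooth_θ.hasDerivAt_pdt x t)).mul (H.smooth_θ.pdx.hasDerivAt_pdt x t)
  rw [← H.smooth_θ.pdt_pdx_comm]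
  refine hc.deriv.trans ?_
  simp only [comp_apply]
  ring

lemma convectiveDeriv_waveStress (H : IsSmoothSolution γ₁ g h c u θ)
    (hκ : ContDiff ℝ (⊤ : ℕ∞) κ) :
    convectiveDeriv κ (movingFrame κ (waveStress c θ)) X t =
      c (movingFrame κ θ X t) * (pdx (effectiveVelocity κ b g h u θ) X t -
        movingFrame κ (pdx (couplingRatio g h θ)) X t * velocityPotential κ b u X t -
        movingFrame κ (couplingRatio g h θ) X t * pdx (velocityPotential κ b u) X t) +
      movingFrame κ (waveSpeedRate c θ) X t * movingFrame κ (waveStress c θ) X t := by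
  have hratio := H.smooth_couplingRatio.movingFrame hκ
  have hV := H.smooth_velocityPotential hκ (b := b)
  have hpdx : pdx (effectiveVelocity κ b g h u θ) X t = _ :=
    pdx_add (H.smooth_θ.pdt.movingFrame hκ) (hratio.mul hV) X t
  rw [hpdx, pdx_mul hratio hV, pdx_movingFrame, pdx_movingFrame,
    convectiveDeriv_movingFrame (hκ.differentiable (by simp)) H.smooth_waveStress]
  have hc := (H.c_pos (θ (X - κ t) t)).ne'
  simp only [movingFrame, H.pdt_waveStress, waveStress, waveSpeedRate]
  field_simp
  ring

lemma smooth_waveSpeedRate (H : IsSmoothSolution γ₁ g h c u θ) :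
    JointlySmooth (waveSpeedRate c θ) :=
  (((contDiff_infty_iff_deriv.1 H.smooth_c).2.comp H.smooth_θ).mul H.smooth_θ.pdt).div
    (H.smooth_c.comp H.smooth_θ) fun _ => (H.c_pos _).ne'

lemma pdt_add_mul_pdx_riemannInvariant (H : IsSmoothSolution γ₁ g h c u θ)
    (hκ : ContDiff ℝ (⊤ : ℕ∞) κ) {R : ℝ} (hR : AtRestBeyond u θ R t) (hb : R < b - κ t)
    (ht : 0 ≤ t) (i : Fin 2) :
    pdt (riemannInvariant κ b g h c u θ i) X t +
        characteristicSpeed κ c θ i X t * pdx (riemannInvariant κ b g h c u θ i) X t =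
      movingFrame κ (pdt (couplingRatio g h θ)) X t * velocityPotential κ b u X t +
        (movingFrame κ (couplingRatio g h θ) X t * h (movingFrame κ θ X t) - γ₁) *
          movingFrame κ (pdt θ) X t +
        characteristicSign i * (movingFrame κ (waveSpeedRate c θ) X t *
            movingFrame κ (waveStress c θ) X t -
          c (movingFrame κ θ X t) * (
            movingFrame κ (pdx (couplingRatio g h θ)) X t * velocityPotential κ b u X t +
            movingFrame κ (couplingRatio g h θ) X t * pdx (velocityPotential κ b u) X t)) := by
  have hP := H.smooth_effectiveVelocity hκ (b := b)
  have hQ := H.smooth_waveStress.movingFrame hκ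
  have hεQ : JointlySmooth fun X t => characteristicSign i * movingFrame κ (waveStress c θ) X t :=
    contDiff_const.mul hQ
  have hD : convectiveDeriv κ (riemannInvariant κ b g h c u θ i) X t = _ :=
    convectiveDeriv_add hP hεQ X t
  have hpdx : pdx (riemannInvariant κ b g h c u θ i) X t = _ := pdx_add hP hεQ X t
  rw [convectiveDeriv_const_mul _ hQ, H.convectiveDeriv_effectiveVelocity hκ hR hb ht,
    H.convectiveDeriv_waveStress hκ (b := b), convectiveDeriv, hpdx, pdx_const_mul _ hQ] at hD
  rw [hpdx, pdx_const_mul _ hQ, characteristicSpeed]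
  linear_combination hD - c (movingFrame κ θ X t) *
    pdx (movingFrame κ (waveStress c θ)) X t * characteristicSign_sq i

end IsSmoothSolution

/-! ### Finite speed of propagation -/

section riemannInvariant

variable (κ : ℝ → ℝ) (b : ℝ) (g h c : ℝ → ℝ) (u θ : ℝ → ℝ → ℝ) (X t : ℝ)

lemma riemannInvariant_add :
    riemannInvariant κ b g h c u θ 0 X t + riemannInvariant κ b g h c u θ 1 X t =
      2 * effectiveVelocity κ b g h u θ X t := by
  simp only [riemannInvariant, characteristicSign, Matrix.cons_val_zero, Matrix.cons_val_one]
  ring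

lemma riemannInvariant_sub :
    riemannInvariant κ b g h c u θ 0 X t - riemannInvariant κ b g h c u θ 1 X t =
      2 * movingFrame κ (waveStress c θ) X t := by
  simp only [riemannInvariant, characteristicSign, Matrix.cons_val_zero, Matrix.cons_val_one]
  ring

lemma movingFrame_pdt_eq :
    movingFrame κ (pdt θ) X t =
      (riemannInvariant κ b g h c u θ 0 X t + riemannInvariant κ b g h c u θ 1 X t) / 2 -
        movingFrame κ (couplingRatio g h θ) X t * velocityPotential κ b u X t := by
  rw [riemannInvariant_add, effectiveVelocity]
  ring

end riemannInvariant

section superluminal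

variable {b R X t : ℝ} {κ g h c : ℝ → ℝ} {u θ : ℝ → ℝ → ℝ}

lemma AtRestBeyond.velocityPotential_eq_zero (hR : AtRestBeyond u θ R t) (hb : R ≤ b - κ t)
    (hX : R ≤ X - κ t) : velocityPotential κ b u X t = 0 := by
  refine (intervalIntegral.integral_congr fun y hy => (?_ : _ = (0 : ℝ))).trans
    intervalIntegral.integral_zero
  have hRy : R + κ t ≤ y := (le_min (by linarith) (by linarith)).trans hy.1
  exact (hR _ (by linarith)).1

namespace IsSmoothSolution

variable {γ₁ : ℝ}

lemma coupledSq_eq_zero_of_atRestBeyond (H : IsSmoothSolution γ₁ g h c u θ)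
    (hκ : ContDiff ℝ (⊤ : ℕ∞) κ) (hR : AtRestBeyond u θ R t) (hb : R ≤ b - κ t)
    (hX : R ≤ X - κ t) :
    coupledSq (velocityPotential κ b u) (riemannInvariant κ b g h c u θ) X t = 0 := by
  have hV : velocityPotential κ b u X t = 0 := hR.velocityPotential_eq_zero hb hX
  obtain ⟨hu, hθx, hθt⟩ := hR _ hX
  refine coupledSq_eq_zero_iff.2 ⟨?_, hV, fun i => ?_⟩
  · rw [H.pdx_velocityPotential hκ, movingFrame, hu]
  · simp only [riemannInvariant, effectiveVelocity, movingFrame, waveStress, hV, hθx, hθt]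
    ring

lemma atRest_of_coupledSq_eq_zero (H : IsSmoothSolution γ₁ g h c u θ)
    (hκ : ContDiff ℝ (⊤ : ℕ∞) κ)
    (hzero : coupledSq (velocityPotential κ b u) (riemannInvariant κ b g h c u θ) X t = 0) :
    AtRest u θ (X - κ t) t := by
  obtain ⟨hVx, hV, hw⟩ := coupledSq_eq_zero_iff.1 hzero
  have hQ := riemannInvariant_sub κ b g h c u θ X t
  have hθt := movingFrame_pdt_eq κ b g h c u θ X t
  simp only [movingFrame, waveStress, hw, hV, sub_self, add_zero, zero_div, mul_zero] at hQ hθt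
  refine ⟨(H.pdx_velocityPotential hκ X t).symm.trans hVx, ?_, hθt⟩
  simpa [(H.c_pos (θ (X - κ t) t)).ne'] using hQ

variable {t₀ t₁ a : ℝ}

lemma exists_forall_sq_heat_le (H : IsSmoothSolution γ₁ g h c u θ)
    (hκ : ContDiff ℝ (⊤ : ℕ∞) κ) (ht₀ : 0 ≤ t₀) (hR : ∀ t ∈ Icc t₀ t₁, AtRestBeyond u θ R t)
    (hb : ∀ t ∈ Icc t₀ t₁, R < b - κ t) :
    ∃ K, ∀ X ∈ Icc a b, ∀ t ∈ Icc t₀ t₁,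
      (pdt (velocityPotential κ b u) X t -
        g (movingFrame κ θ X t) * pdx (pdx (velocityPotential κ b u)) X t) ^ 2 ≤
        K * coupledSq (velocityPotential κ b u) (riemannInvariant κ b g h c u θ) X t := by
  have hκ' : Continuous (deriv κ) := (contDiff_infty_iff_deriv.1 hκ).2.continuous
  have hh : Continuous h := H.smooth_h.continuous
  have hθ := H.smooth_θ.movingFrame hκ
  have hr := H.smooth_couplingRatio.movingFrame hκ
  obtain ⟨K, hK⟩ := exists_forall_sq_add_sum_le (a := a) (b := b) (t₀ := t₀) (t₁ := t₁)
    (V := velocityPotential κ b u) (w := riemannInvariant κ b g h c u θ)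
    (α₀ := fun X t => -(h (movingFrame κ θ X t) * movingFrame κ (couplingRatio g h θ) X t))
    (α₁ := fun _ t => -deriv κ t) (β := fun _ X t => h (movingFrame κ θ X t) / 2)
    (by fun_prop) (by fun_prop) (fun _ => by fun_prop)
  refine ⟨K, fun X hX t ht => (le_of_eq ?_).trans (hK X hX t ht)⟩
  rw [H.pdt_sub_mul_pdx_pdx_velocityPotential hκ (hR t ht) (hb t ht) (ht₀.trans ht.1),
    movingFrame_pdt_eq κ b g h c u θ, Fin.sum_univ_two]
  ring

lemma exists_forall_sq_transport_le (H : IsSmoothSolution γ₁ g h c u θ)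
    (hκ : ContDiff ℝ (⊤ : ℕ∞) κ) (ht₀ : 0 ≤ t₀) (hR : ∀ t ∈ Icc t₀ t₁, AtRestBeyond u θ R t)
    (hb : ∀ t ∈ Icc t₀ t₁, R < b - κ t) (i : Fin 2) :
    ∃ K, ∀ X ∈ Icc a b, ∀ t ∈ Icc t₀ t₁,
      (pdt (riemannInvariant κ b g h c u θ i) X t +
        characteristicSpeed κ c θ i X t * pdx (riemannInvariant κ b g h c u θ i) X t) ^ 2 ≤
        K * coupledSq (velocityPotential κ b u) (riemannInvariant κ b g h c u θ) X t := by
  have hh : Continuous h := H.smooth_h.continuous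
  have hc : Continuous c := H.smooth_c.continuous
  have hθ := H.smooth_θ.movingFrame hκ
  have hr := H.smooth_couplingRatio.movingFrame hκ
  have hr_t := H.smooth_couplingRatio.pdt.movingFrame hκ
  have hr_x := H.smooth_couplingRatio.pdx.movingFrame hκ
  have hd := H.smooth_waveSpeedRate.movingFrame hκ
  let C : ℝ → ℝ → ℝ := fun X t => c (movingFrame κ θ X t)
  let r := movingFrame κ (couplingRatio g h θ)
  let m : ℝ → ℝ → ℝ := fun X t => r X t * h (movingFrame κ θ X t) - γ₁
  let d := movingFrame κ (waveSpeedRate c θ)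
  let ε := characteristicSign i
  have hC : Continuous (uncurry C) := by fun_prop
  have hm : Continuous (uncurry m) := by fun_prop
  obtain ⟨K, hK⟩ := exists_forall_sq_add_sum_le (a := a) (b := b) (t₀ := t₀) (t₁ := t₁)
    (V := velocityPotential κ b u) (w := riemannInvariant κ b g h c u θ)
    (α₀ := fun X t => movingFrame κ (pdt (couplingRatio g h θ)) X t - m X t * r X t -
      ε * C X t * movingFrame κ (pdx (couplingRatio g h θ)) X t)
    (α₁ := fun X t => -(ε * C X t * r X t))
    (β := fun j X t => m X t / 2 + characteristicSign j * (ε * d X t / 2))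
    (by fun_prop) (by fun_prop) (fun _ => by fun_prop)
  refine ⟨K, fun X hX t ht => (le_of_eq ?_).trans (hK X hX t ht)⟩
  have hQ := riemannInvariant_sub κ b g h c u θ X t
  rw [H.pdt_add_mul_pdx_riemannInvariant hκ (hR t ht) (hb t ht) (ht₀.trans ht.1),
    movingFrame_pdt_eq κ b g h c u θ, Fin.sum_univ_two]
  congr 1
  simp only [C, r, m, d, ε, characteristicSign, Matrix.cons_val_zero, Matrix.cons_val_one]
  linear_combination (-(![1, -1] i * movingFrame κ (waveSpeedRate c θ) X t / 2 : ℝ)) * hQ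

theorem atRest_of_superluminal (H : IsSmoothSolution γ₁ g h c u θ) {σ : ℝ}
    (hκ : ContDiff ℝ (⊤ : ℕ∞) κ) (hσ : |σ| ≤ 1) (ht₀ : 0 ≤ t₀) (ht : t₀ < t₁)
    (hR : ∀ t ∈ Icc t₀ t₁, AtRestBeyond u θ R t)
    (h₀ : AtRestBeyond u θ (a - κ t₀) t₀) (h₁ : AtRestBeyond u θ (a - κ t₁) t₁)
    (hspeed : ∀ t ∈ Icc t₀ t₁, ∀ x, a - κ t ≤ x → c (θ x t) < σ * deriv κ t)
    {x : ℝ} (htt : t ∈ Icc t₀ t₁) (hx : a - κ t < x) : AtRest u θ x t := by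
  obtain ⟨M, hM⟩ := (isCompact_Icc (a := t₀) (b := t₁)).bddAbove_image hκ.continuous.continuousOn
  have hκM (s) (hs : s ∈ Icc t₀ t₁) : κ s ≤ M := hM (mem_image_of_mem κ hs)
  obtain ⟨b, hb⟩ : ∃ b, max a (R + M) < b := exists_gt _
  have hab : a < b := (le_max_left _ _).trans_lt hb
  have hRb (s) (hs : s ∈ Icc t₀ t₁) : R < b - κ s := by
    linarith [hκM s hs, (le_max_right a (R + M)).trans_lt hb]
  rcases le_or_gt b (x + κ t) with hbx | hxb
  · exact hR t htt x (by linarith [hRb t htt])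
  have hfaster (i : Fin 2) (X) (hX : X ∈ Icc a b) (s) (hs : s ∈ Icc t₀ t₁) :
      0 < σ * characteristicSpeed κ c θ i X s := by
    have hlt := hspeed s hs (X - κ s) (by linarith [hX.1])
    have hsign : |σ * characteristicSign i| ≤ 1 := by
      rw [← sq_le_one_iff_abs_le_one, mul_pow, characteristicSign_sq, mul_one]
      exact (sq_le_one_iff_abs_le_one σ).2 hσ
    calc 0 < σ * deriv κ s - 1 * c (θ (X - κ s) s) := by linarith
      _ ≤ σ * deriv κ s - σ * characteristicSign i * c (θ (X - κ s) s) :=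
        sub_le_sub_left
          (mul_le_mul_of_nonneg_right ((le_abs_self _).trans hsign) (H.c_pos _).le) _
      _ = σ * characteristicSpeed κ c θ i X s := by
        rw [characteristicSpeed, movingFrame]
        ring
  have hzero := coupledSq_eq_zero_of_vanish_on_boundary (G := fun X t => g (movingFrame κ θ X t))
    (H.smooth_velocityPotential hκ (b := b)) (H.smooth_g.comp (H.smooth_θ.movingFrame hκ))
    (H.smooth_riemannInvariant hκ (b := b)) (H.smooth_characteristicSpeed hκ) hab.le ht
    (fun _ _ _ _ => H.g_pos _) hfaster (H.exists_forall_sq_heat_le hκ ht₀ hR hRb)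
    (H.exists_forall_sq_transport_le hκ ht₀ hR hRb)
    (fun X hX => H.coupledSq_eq_zero_of_atRestBeyond hκ h₀ (by linarith) (by linarith [hX.1]))
    (fun X hX => H.coupledSq_eq_zero_of_atRestBeyond hκ h₁ (by linarith) (by linarith [hX.1]))
    (fun s hs => H.coupledSq_eq_zero_of_atRestBeyond hκ (hR s hs) (hRb s hs).le (hRb s hs).le)
    (x + κ t) ⟨by linarith, hxb⟩ t htt
  simpa using H.atRest_of_coupledSq_eq_zero hκ hzero

end IsSmoothSolution

end superluminal

lemma AtRestBeyond.eq_of_atRestBeyond {u θ : ℝ → ℝ → ℝ} {R R' t : ℝ} (hθ : JointlySmooth θ)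
    (hR : AtRestBeyond u θ R t) (hR' : AtRestBeyond u θ R' t) : θ R t = θ R' t := by
  rcases le_total R R' with hle | hle
  · exact hR.eq_of_le hθ le_rfl hle
  · exact hR'.eq_of_le hθ hle le_rfl

lemma div_sub_nonneg_of_mem_uIcc {e f t : ℝ} (ht : t ∈ uIcc e f) : 0 ≤ (t - e) / (f - e) := by
  rcases mem_uIcc.1 ht with h | h
  · exact div_nonneg (sub_nonneg.2 h.1) (sub_nonneg.2 (h.1.trans h.2))
  · exact div_nonneg_of_nonpos (sub_nonpos.2 h.2) (sub_nonpos.2 (h.1.trans h.2))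

namespace IsSmoothSolution

variable {γ₁ : ℝ} {g h c : ℝ → ℝ} {u θ : ℝ → ℝ → ℝ}

section front

variable {R t₀ t₁ σ a m : ℝ} {κ : ℝ → ℝ}

lemma exists_lt_superluminal (H : IsSmoothSolution γ₁ g h c u θ) (hκ : ContDiff ℝ (⊤ : ℕ∞) κ)
    (hR : ∀ t ∈ Icc t₀ t₁, AtRestBeyond u θ R t)
    (hspeed : ∀ t ∈ Icc t₀ t₁, c (θ R t) < σ * deriv κ t)
    (hm : ∀ t ∈ Icc t₀ t₁, AtRestBeyond u θ (m - κ t) t) :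
    ∃ l < m, ∀ M, l < M → ∀ t ∈ Icc t₀ t₁, ∀ x, M - κ t ≤ x → c (θ x t) < σ * deriv κ t := by
  have hθ (t) (ht : t ∈ Icc t₀ t₁) (x) (hx : m - κ t ≤ x) : θ x t = θ R t :=
    ((hm t ht).mono hx).eq_of_atRestBeyond H.smooth_θ (hR t ht)
  have hcθ : Continuous fun p : ℝ × ℝ => c (movingFrame κ θ p.1 p.2) :=
    H.smooth_c.continuous.comp (H.smooth_θ.movingFrame hκ).continuous
  have hκ' : Continuous (deriv κ) := (contDiff_infty_iff_deriv.1 hκ).2.continuous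
  have hnear : ∀ᶠ M in 𝓝 m, ∀ t ∈ Icc t₀ t₁, c (movingFrame κ θ M t) < σ * deriv κ t :=
    isCompact_Icc.eventually_forall_of_forall_eventually fun t ht => by
      refine ContinuousAt.eventually_lt hcθ.continuousAt (by fun_prop) ?_
      simpa only [movingFrame, hθ t ht _ le_rfl] using hspeed t ht
  obtain ⟨l, hlm, hl⟩ := exists_Ioc_subset_of_mem_nhds hnear (exists_lt m)
  refine ⟨l, hlm, fun M hM t ht x hx => ?_⟩
  rcases le_total (m - κ t) x with hmx | hxm
  · rw [hθ t ht x hmx]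
    exact hspeed t ht
  · simpa [movingFrame] using hl (show x + κ t ∈ Ioc l m from ⟨by linarith, by linarith⟩) t ht

/-- The leftmost translate of the curve beyond which the solution is at rest can be moved further
left, unless it is the curve itself: at the contact points `θ` takes its value at infinity, so the
curve is superluminal there. -/
theorem atRest_of_superluminal_at_infinity (H : IsSmoothSolution γ₁ g h c u θ)
    (hκ : ContDiff ℝ (⊤ : ℕ∞) κ) (hσ : |σ| ≤ 1) (ht₀ : 0 ≤ t₀) (ht : t₀ < t₁)
    (hR : ∀ t ∈ Icc t₀ t₁, AtRestBeyond u θ R t)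
    (h₀ : AtRestBeyond u θ (a - κ t₀) t₀) (h₁ : AtRestBeyond u θ (a - κ t₁) t₁)
    (hspeed : ∀ t ∈ Icc t₀ t₁, c (θ R t) < σ * deriv κ t) :
    ∀ t ∈ Icc t₀ t₁, ∀ x, a - κ t < x → AtRest u θ x t := by
  let S : Set ℝ := {M | a ≤ M ∧ ∀ t ∈ Icc t₀ t₁, ∀ x, M - κ t < x → AtRest u θ x t}
  have hS_bdd : BddBelow S := ⟨a, fun M hM => hM.1⟩
  have hS_nonempty : S.Nonempty := by
    obtain ⟨M, hM⟩ :=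
      (isCompact_Icc (a := t₀) (b := t₁)).bddAbove_image hκ.continuous.continuousOn
    refine ⟨max a (R + M), le_max_left _ _, fun t ht x hx => hR t ht x ?_⟩
    linarith [hM (mem_image_of_mem κ ht), le_max_right a (R + M)]
  have hrest : ∀ t ∈ Icc t₀ t₁, ∀ x, sInf S - κ t < x → AtRest u θ x t := fun t ht x hx => by
    obtain ⟨M, hM, hMx⟩ := (csInf_lt_iff hS_bdd hS_nonempty).1 (sub_lt_iff_lt_add.1 hx)
    exact hM.2 t ht x (sub_lt_iff_lt_add.2 hMx)
  suffices sInf S = a from this ▸ hrest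
  refine le_antisymm (not_lt.1 fun hlt => ?_) (le_csInf hS_nonempty fun M hM => hM.1)
  obtain ⟨l, hl, hspeed'⟩ := H.exists_lt_superluminal hκ hR hspeed fun t ht =>
    atRestBeyond_of_forall_lt H.smooth_u H.smooth_θ (hrest t ht)
  obtain ⟨M, hM, hMS⟩ := exists_between (max_lt hl hlt)
  have haM : a ≤ M := (le_max_right l a).trans hM.le
  refine hMS.not_ge (csInf_le hS_bdd ⟨haM, fun t htt x hx => ?_⟩)
  exact H.atRest_of_superluminal hκ hσ ht₀ ht hR (h₀.mono (by linarith)) (h₁.mono (by linarith))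
    (hspeed' M ((le_max_left l a).trans_lt hM)) htt hx

end front

section propagation

variable {e f N r s : ℝ}

/-- The curves `x = r + s |t - e| + K p ^ (n + 1)`, where `p` runs from `0` to `1` as `t` runs from
`e` to `f`, start at `(r, e)` and, for large `K`, end beyond `N`. -/
lemma atRest_of_lt_add_pow (H : IsSmoothSolution γ₁ g h c u θ) (he : 0 ≤ e) (hf : 0 ≤ f)
    (hef : e ≠ f) (hN : ∀ t ∈ uIcc e f, AtRestBeyond u θ N t) (hr : AtRestBeyond u θ r e)
    (hs : c (θ r e) < s) {K : ℝ} (hK : 0 ≤ K) (hKN : N ≤ r + s * |f - e| + K) (n : ℕ)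
    {p : ℝ} (hp : p ∈ Icc (0 : ℝ) 1) {x : ℝ} (hx : r + s * |f - e| * p + K * p ^ (n + 1) < x) :
    AtRest u θ x (e + p * (f - e)) := by
  have hd : f - e ≠ 0 := sub_ne_zero.2 hef.symm
  have hd' : 0 < |f - e| := abs_pos.2 hd
  let q : ℝ → ℝ := fun τ => (τ - e) / (f - e)
  let κ : ℝ → ℝ := fun τ => -(r + s * |f - e| * q τ + K * q τ ^ (n + 1))
  have hderiv (τ) : deriv κ τ = -((s * |f - e| + K * ((n + 1) * q τ ^ n)) / (f - e)) := by
    have hq : HasDerivAt q (1 / (f - e)) τ := ((hasDerivAt_id τ).sub_const e).div_const (f - e)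
    refine ((((hq.const_mul _).const_add r).add
      ((hq.fun_pow (n + 1)).const_mul K)).neg).deriv.trans ?_
    push_cast
    ring
  have hspeed (τ) (hτ : τ ∈ uIcc e f) : c (θ N τ) < -((f - e) / |f - e|) * deriv κ τ := by
    have hθ : θ N τ = θ r e :=
      (eq_of_forall_atRest H.smooth_θ (fun t ht => hN t ht N le_rfl) hτ left_mem_uIcc).trans
        ((hN e left_mem_uIcc).eq_of_atRestBeyond H.smooth_θ hr)
    have hq_nonneg : 0 ≤ q τ := div_sub_nonneg_of_mem_uIcc hτ
    calc c (θ N τ) < s := hθ ▸ hs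
      _ ≤ s + K * ((n + 1) * q τ ^ n) / |f - e| := le_add_of_nonneg_right (by positivity)
      _ = -((f - e) / |f - e|) * deriv κ τ := by
        rw [hderiv]
        field_simp
  have hends (τ) (hτ : τ = e ∨ τ = f) : AtRestBeyond u θ (0 - κ τ) τ := by
    rcases hτ with rfl | rfl
    · exact hr.mono (by simp [κ, q])
    · exact (hN τ right_mem_uIcc).mono (by simpa [κ, q, hd] using hKN)
  have hqp : q (e + p * (f - e)) = p := by
    simp [q, hd]
  refine H.atRest_of_superluminal_at_infinity (a := 0) (κ := κ) (σ := -((f - e) / |f - e|))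
    (by fun_prop) (by simp [abs_div, hd]) (le_min he hf) (min_lt_max.2 hef) hN
    (hends _ (min_choice e f)) (hends _ (max_choice e f)) hspeed _ ?_ x ?_
  · exact (convex_uIcc e f).add_smul_sub_mem left_mem_uIcc right_mem_uIcc hp
  · simpa [κ, hqp] using hx

end propagation

end IsSmoothSolution

theorem AtRestBeyond.propagate {γ₁ e f N r s : ℝ} {g h c : ℝ → ℝ} {u θ : ℝ → ℝ → ℝ}
    (hr : AtRestBeyond u θ r e) (H : IsSmoothSolution γ₁ g h c u θ) (he : 0 ≤ e) (hf : 0 ≤ f)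
    (hN : ∀ t ∈ uIcc e f, AtRestBeyond u θ N t) (hs : c (θ r e) < s) :
    AtRestBeyond u θ (r + s * |f - e|) f := by
  rcases eq_or_ne e f with rfl | hef
  · simpa using hr
  have hs_pos : 0 < s := (H.c_pos _).trans hs
  refine atRestBeyond_of_forall_lt H.smooth_u H.smooth_θ fun x hx => ?_
  obtain ⟨K, hK, hKN⟩ : ∃ K, 0 ≤ K ∧ N ≤ r + s * |f - e| + K :=
    ⟨max 0 (N - (r + s * |f - e|)), le_max_left _ _, sub_le_iff_le_add'.1 (le_max_right _ _)⟩
  have hclosed : IsClosed {p : ℝ | AtRest u θ x (e + p * (f - e))} :=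
    (isClosed_setOf_atRest H.smooth_u H.smooth_θ).preimage
      (by fun_prop : Continuous fun p : ℝ => (x, e + p * (f - e)))
  have hrest : Ico (0 : ℝ) 1 ⊆ {p : ℝ | AtRest u θ x (e + p * (f - e))} := fun p hp => by
    have hlim : Tendsto (fun n : ℕ => r + s * |f - e| * p + K * p ^ (n + 1)) atTop
        (𝓝 (r + s * |f - e| * p + K * 0)) :=
      (((tendsto_pow_atTop_nhds_zero_of_lt_one hp.1 hp.2).comp
        (tendsto_add_atTop_nat 1)).const_mul _).const_add _
    have hlt : r + s * |f - e| * p + K * 0 < x := by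
      have := mul_le_of_le_one_right (by positivity : 0 ≤ s * |f - e|) hp.2.le
      linarith
    obtain ⟨n, hn⟩ := (hlim.eventually_lt_const hlt).exists
    exact H.atRest_of_lt_add_pow he hf hef hN hr hs hK hKN n ⟨hp.1, hp.2.le⟩ hn
  have hone := hclosed.closure_subset_iff.2 hrest
    (by simp [closure_Ico (zero_ne_one' ℝ)] : (1 : ℝ) ∈ closure (Ico 0 1))
  simpa using hone

/-! ### Locally uniform bounds on the support -/

lemma exists_eventually_nhdsWithin_mem_of_isClosed {X : Type*} [MetricSpace X] [CompleteSpace X]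
    {F : Set X} {A : ℕ → Set X} (hF : IsClosed F) (hF_nonempty : F.Nonempty)
    (hA : ∀ n, IsClosed (A n)) (hFA : F ⊆ ⋃ n, A n) :
    ∃ x ∈ F, ∃ n, ∀ᶠ y in 𝓝[F] x, y ∈ A n := by
  have : CompleteSpace F := hF.completeSpace_coe
  have : Nonempty F := hF_nonempty.to_subtype
  obtain ⟨n, x, hx⟩ := nonempty_interior_of_iUnion_of_closed
    (fun n => (hA n).preimage continuous_subtype_val)
    (eq_univ_of_forall fun x => by simpa only [mem_iUnion, mem_preimage] using hFA x.2)
  exact ⟨x, x.2, n, preimage_coe_mem_nhds_subtype.1 (mem_interior_iff_mem_nhds.1 hx)⟩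

lemma exists_mem_uIcc_forall_eq_of_isClosed {F : Set ℝ} (hF : IsClosed F) {a b : ℝ} (ha : a ∈ F) :
    ∃ e ∈ uIcc a b, e ∈ F ∧ ∀ z ∈ uIcc e b, z ∈ F → z = e := by
  obtain ⟨e, ⟨he, heF⟩, hmin⟩ := (isCompact_uIcc.inter_right hF).exists_isMinOn
    (s := uIcc a b ∩ F) ⟨a, left_mem_uIcc, ha⟩ (f := fun z => |z - b|) (by fun_prop)
  refine ⟨e, he, heF, fun z hz hzF => ?_⟩
  have hle : |e - b| ≤ |z - b| := hmin ⟨uIcc_subset_uIcc_right he hz, hzF⟩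
  rcases mem_uIcc.1 hz with h | h
  · rw [abs_of_nonpos (by linarith), abs_of_nonpos (by linarith)] at hle
    linarith
  · rw [abs_of_nonneg (by linarith), abs_of_nonneg (by linarith)] at hle
    linarith

/-- Near time `t`, the set where the solution is not at rest is bounded above uniformly in time.
Only nonnegative times matter. -/
def EventuallyAtRestBeyond (u θ : ℝ → ℝ → ℝ) (t : ℝ) : Prop :=
  ∃ R, ∀ᶠ τ in 𝓝 t, 0 ≤ τ → AtRestBeyond u θ R τ

lemma isOpen_setOf_eventuallyAtRestBeyond (u θ : ℝ → ℝ → ℝ) :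
    IsOpen {t | EventuallyAtRestBeyond u θ t} :=
  isOpen_iff_mem_nhds.2 fun _ ⟨R, hR⟩ =>
    (eventually_eventually_nhds.2 hR).mono fun _ hτ => ⟨R, hτ⟩

lemma exists_forall_atRestBeyond_of_isCompact {u θ : ℝ → ℝ → ℝ} {I : Set ℝ} (hI : IsCompact I)
    (hI_nonneg : ∀ t ∈ I, 0 ≤ t) (h : ∀ t ∈ I, EventuallyAtRestBeyond u θ t) :
    ∃ R, ∀ t ∈ I, AtRestBeyond u θ R t := by
  have hbound : ∃ R, ∀ t ∈ I, 0 ≤ t → AtRestBeyond u θ R t := by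
    refine hI.induction_on (p := fun s => ∃ R, ∀ t ∈ s, 0 ≤ t → AtRestBeyond u θ R t)
      ⟨0, by simp⟩ (fun s s' hss ⟨R, hR⟩ => ⟨R, fun t ht => hR t (hss ht)⟩) ?_ fun t ht => ?_
    · rintro s s' ⟨R, hR⟩ ⟨R', hR'⟩
      refine ⟨max R R', fun t ht ht₀ => ?_⟩
      exact ht.elim (fun ht => (hR t ht ht₀).mono (le_max_left _ _))
        fun ht => (hR' t ht ht₀).mono (le_max_right _ _)
    · obtain ⟨R, hR⟩ := h t ht
      exact ⟨_, mem_nhdsWithin_of_mem_nhds hR, R, fun _ hτ => hτ⟩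
  exact hbound.imp fun R hR t ht => hR t ht (hI_nonneg t ht)

section localBound

variable {γ₁ : ℝ} {g h c : ℝ → ℝ} {u θ : ℝ → ℝ → ℝ}

/-- Propagation backwards from `f` bounds the support uniformly up to time `e`, which is what
propagation from `e` to `f` requires. -/
lemma AtRestBeyond.propagate_of_eventually {e f r s : ℝ} (hr : AtRestBeyond u θ r e)
    (H : IsSmoothSolution γ₁ g h c u θ) (he : 0 ≤ e) (hf : 0 ≤ f)
    (hgood : ∀ t ∈ uIcc e f, t ≠ e → EventuallyAtRestBeyond u θ t)
    (hrest : ∃ R, AtRestBeyond u θ R f) (hs : c (θ r e) < s) :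
    AtRestBeyond u θ (r + s * |f - e|) f := by
  obtain ⟨R, hR⟩ := hrest
  obtain ⟨S, hS⟩ := exists_gt (c (θ R f))
  have hS_pos : 0 < S := (H.c_pos _).trans hS
  refine hr.propagate H he hf (N := max r (R + S * |f - e|)) (fun t ht => ?_) hs
  rcases eq_or_ne t e with rfl | hte
  · exact hr.mono (le_max_left _ _)
  have hsub : uIcc f t ⊆ uIcc e f := uIcc_subset_uIcc right_mem_uIcc ht
  have hnonneg (τ) (hτ : τ ∈ uIcc e f) : 0 ≤ τ := (le_min he hf).trans hτ.1
  have hne (τ) (hτ : τ ∈ uIcc f t) : τ ≠ e := by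
    rintro rfl
    exact hte (eq_of_mem_uIcc_of_mem_uIcc (uIcc_comm f t ▸ hτ) (uIcc_comm τ f ▸ ht)).symm
  obtain ⟨N, hN⟩ := exists_forall_atRestBeyond_of_isCompact isCompact_uIcc
    (fun τ hτ => hnonneg τ (hsub hτ)) fun τ hτ => hgood τ (hsub hτ) (hne τ hτ)
  refine (hR.propagate H hf (hnonneg t ht) hN hS).mono (le_max_of_le_right ?_)
  gcongr R + S * ?_
  rw [abs_sub_comm]
  exact abs_sub_right_of_mem_uIcc ht

lemma forall_eventuallyAtRestBeyond (H : IsSmoothSolution γ₁ g h c u θ)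
    (hrest : ∀ t, 0 ≤ t → ∃ R, AtRestBeyond u θ R t) (t : ℝ) (ht : 0 ≤ t) :
    EventuallyAtRestBeyond u θ t := by
  by_contra hbad
  let F : Set ℝ := {t | 0 ≤ t ∧ ¬ EventuallyAtRestBeyond u θ t}
  have hF : IsClosed F :=
    isClosed_Ici.inter (isOpen_setOf_eventuallyAtRestBeyond u θ).isClosed_compl
  have hclosed (n : ℕ) : IsClosed {t | AtRestBeyond u θ n t} := by
    simp only [AtRestBeyond, ofPred_forall]
    exact isClosed_biInter fun x _ => (isClosed_setOf_atRest H.smooth_u H.smooth_θ).preimage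
      (by fun_prop : Continuous fun t : ℝ => (x, t))
  have hcover : F ⊆ ⋃ n : ℕ, {t | AtRestBeyond u θ n t} := fun t ht => by
    obtain ⟨R, hR⟩ := hrest t ht.1
    exact mem_iUnion.2 ((exists_nat_ge R).imp fun n hn => hR.mono hn)
  obtain ⟨t₀, ht₀, n, hn⟩ :=
    exists_eventually_nhdsWithin_mem_of_isClosed hF ⟨t, ht, hbad⟩ hclosed hcover
  obtain ⟨s, hs⟩ := exists_gt (c (θ n t₀))
  have hs_pos : 0 < s := (H.c_pos _).trans hs
  have hspeed : ∀ᶠ τ in 𝓝 t₀, c (θ n τ) < s :=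
    (H.smooth_c.continuous.comp (H.smooth_θ.continuous_right n)).continuousAt.eventually_lt_const hs
  obtain ⟨ε, hε, hball⟩ :=
    Metric.eventually_nhds_iff.1 ((eventually_nhdsWithin_iff.1 hn).and hspeed)
  refine ht₀.2 ⟨n + s * ε, Metric.eventually_nhds_iff.2 ⟨ε, hε, fun τ hτ hτ₀ => ?_⟩⟩
  obtain ⟨e, he, heF, heq⟩ := exists_mem_uIcc_forall_eq_of_isClosed hF (b := τ) ht₀
  obtain ⟨hrest_e, hspeed_e⟩ := hball ((abs_sub_left_of_mem_uIcc he).trans_lt hτ)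
  refine ((hrest_e heF).propagate_of_eventually H heF.1 hτ₀ (fun z hz hze => ?_) (hrest τ hτ₀)
    hspeed_e).mono ?_
  · by_contra hzbad
    exact hze (heq z hz ⟨(le_min heF.1 hτ₀).trans hz.1, hzbad⟩)
  · gcongr
    exact (abs_sub_right_of_mem_uIcc he).trans hτ.le

end localBound

/-- The reflection of `f` in the space variable. -/
def spaceReflection (f : ℝ → ℝ → ℝ) : ℝ → ℝ → ℝ := fun x t => f (-x) t

section reflection

variable {f : ℝ → ℝ → ℝ}

lemma JointlySmooth.spaceReflection (hf : JointlySmooth f) : JointlySmooth (spaceReflection f) :=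
  ContDiff.comp hf (contDiff_fst.neg.prodMk contDiff_snd)

lemma pdx_spaceReflection : pdx (spaceReflection f) = -spaceReflection (pdx f) :=
  funext₂ fun x t => deriv_comp_neg (fun y => f y t) x

lemma pdt_spaceReflection : pdt (spaceReflection f) = spaceReflection (pdt f) := rfl

lemma pdx_neg : pdx (-f) = -pdx f := funext₂ fun _ t => deriv.fun_neg (f := fun y => f y t)

lemma pdt_neg : pdt (-f) = -pdt f := funext₂ fun x _ => deriv.fun_neg (f := fun s => f x s)

end reflection

section bound

variable {γ₁ : ℝ} {g h c : ℝ → ℝ} {u θ : ℝ → ℝ → ℝ}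

lemma IsSmoothSolution.spaceReflection (H : IsSmoothSolution γ₁ g h c u θ) :
    IsSmoothSolution γ₁ g h c (-spaceReflection u) (spaceReflection θ) where
  smooth_g := H.smooth_g
  smooth_h := H.smooth_h
  smooth_c := H.smooth_c
  g_pos := H.g_pos
  c_pos := H.c_pos
  smooth_u := ContDiff.neg H.smooth_u.spaceReflection
  smooth_θ := H.smooth_θ.spaceReflection
  heat x t ht := by
    have hflux : heatFlux g h (-_root_.spaceReflection u) (_root_.spaceReflection θ) =
        _root_.spaceReflection (heatFlux g h u θ) := by
      ext x t
      simp only [heatFlux, pdx_neg, pdx_spaceReflection, pdt_spaceReflection, neg_neg]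
      rfl
    rw [hflux, pdx_spaceReflection, pdt_neg, pdt_spaceReflection]
    exact congrArg Neg.neg (H.heat (-x) t ht)
  wave x t ht := by
    have hstress : waveStress c (_root_.spaceReflection θ) =
        -_root_.spaceReflection (waveStress c θ) := by
      ext x t
      simp only [waveStress, pdx_spaceReflection]
      exact mul_neg _ _
    rw [hstress, pdx_neg, pdx_spaceReflection, pdx_neg, pdx_spaceReflection, neg_neg, neg_neg]
    exact H.wave (-x) t ht

lemma atRest_spaceReflection_iff {x t : ℝ} :
    AtRest (-spaceReflection u) (spaceReflection θ) x t ↔ AtRest u θ (-x) t := by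
  simp only [AtRest, pdx_spaceReflection, pdt_spaceReflection, Pi.neg_apply, neg_eq_zero]
  rfl

lemma exists_forall_atRestBeyond (H : IsSmoothSolution γ₁ g h c u θ)
    (hrest : ∀ t, 0 ≤ t → ∃ R, AtRestBeyond u θ R t) {t₀ : ℝ} (ht₀ : 0 ≤ t₀) (t₁ : ℝ) :
    ∃ R, ∀ t ∈ Icc t₀ t₁, AtRestBeyond u θ R t :=
  exists_forall_atRestBeyond_of_isCompact isCompact_Icc (fun _ ht => ht₀.trans ht.1)
    fun t ht => forall_eventuallyAtRestBeyond H hrest t (ht₀.trans ht.1)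

theorem exists_forall_atRest_of_le_abs (H : IsSmoothSolution γ₁ g h c u θ)
    (hrest : ∀ t, 0 ≤ t → ∃ R, ∀ x, R ≤ |x| → AtRest u θ x t) {t₀ : ℝ} (ht₀ : 0 ≤ t₀) (t₁ : ℝ) :
    ∃ R, ∀ t ∈ Icc t₀ t₁, ∀ x, R ≤ |x| → AtRest u θ x t := by
  obtain ⟨R, hR⟩ := exists_forall_atRestBeyond H
    (fun t ht => (hrest t ht).imp fun R hR x hx => hR x (hx.trans (le_abs_self x))) ht₀ t₁
  obtain ⟨L, hL⟩ := exists_forall_atRestBeyond H.spaceReflection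
    (fun t ht => (hrest t ht).imp fun R hR x hx =>
      atRest_spaceReflection_iff.2 (hR _ (abs_neg x ▸ hx.trans (le_abs_self x)))) ht₀ t₁
  refine ⟨max R L, fun t ht x hx => ?_⟩
  rcases le_abs.1 hx with hpos | hneg
  · exact hR t ht x ((le_max_left _ _).trans hpos)
  · simpa using atRest_spaceReflection_iff.1 (hL t ht (-x) ((le_max_right _ _).trans hneg))

lemma exists_forall_atRest_of_hasCompactSupport {t : ℝ} (hu : HasCompactSupport fun x => u x t)
    (hθx : HasCompactSupport fun x => pdx θ x t) (hθt : HasCompactSupport fun x => pdt θ x t) :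
    ∃ R, ∀ x, R ≤ |x| → AtRest u θ x t := by
  obtain ⟨R₁, -, h₁⟩ := hu.exists_pos_le_norm
  obtain ⟨R₂, -, h₂⟩ := hθx.exists_pos_le_norm
  obtain ⟨R₃, -, h₃⟩ := hθt.exists_pos_le_norm
  refine ⟨max R₁ (max R₂ R₃), fun x hx => ?_⟩
  simp only [max_le_iff] at hx
  exact ⟨h₁ x hx.1, h₂ x hx.2.1, h₃ x hx.2.2⟩

end bound

/-! ### The energy -/

/-- Twice the density of the energy. -/
noncomputable def energyDensity (c : ℝ → ℝ) (u θ : ℝ → ℝ → ℝ) (x t : ℝ) : ℝ :=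
  pdt θ x t ^ 2 + c (θ x t) ^ 2 * pdx θ x t ^ 2 + u x t ^ 2

/-- The flux of `energyDensity`. -/
noncomputable def energyFlux (g h c : ℝ → ℝ) (u θ : ℝ → ℝ → ℝ) (x t : ℝ) : ℝ :=
  -2 * (c (θ x t) * waveStress c θ x t * pdt θ x t + u x t * heatFlux g h u θ x t)

section energy

variable {γ₁ x t : ℝ} {g h c : ℝ → ℝ} {u θ : ℝ → ℝ → ℝ}

lemma AtRest.energyDensity_eq_zero (hrest : AtRest u θ x t) : energyDensity c u θ x t = 0 := by
  simp [energyDensity, hrest.1, hrest.2.1, hrest.2.2]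

lemma AtRest.energyFlux_eq_zero (hrest : AtRest u θ x t) : energyFlux g h c u θ x t = 0 := by
  simp [energyFlux, hrest.1, hrest.2.2]

namespace IsSmoothSolution

lemma smooth_energyDensity (H : IsSmoothSolution γ₁ g h c u θ) :
    JointlySmooth (energyDensity c u θ) :=
  ((H.smooth_θ.pdt.pow 2).add (((H.smooth_c.comp H.smooth_θ).pow 2).mul
    (H.smooth_θ.pdx.pow 2))).add (H.smooth_u.pow 2)

lemma smooth_energyFlux (H : IsSmoothSolution γ₁ g h c u θ) :
    JointlySmooth (energyFlux g h c u θ) :=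
  contDiff_const.mul
    ((((H.smooth_c.comp H.smooth_θ).mul H.smooth_waveStress).mul H.smooth_θ.pdt).add
      (H.smooth_u.mul H.smooth_heatFlux))

lemma pdx_energyFlux (H : IsSmoothSolution γ₁ g h c u θ) (x t : ℝ) :
    pdx (energyFlux g h c u θ) x t =
      -2 * ((deriv c (θ x t) * pdx θ x t * waveStress c θ x t +
        c (θ x t) * pdx (waveStress c θ) x t) * pdt θ x t +
        c (θ x t) * waveStress c θ x t * pdx (pdt θ) x t +
        (pdx u x t * heatFlux g h u θ x t + u x t * pdx (heatFlux g h u θ) x t)) :=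
  (((((H.smooth_c.differentiable (by simp) (θ x t)).hasDerivAt.comp x
    (H.smooth_θ.hasDerivAt_pdx x t)).mul (H.smooth_waveStress.hasDerivAt_pdx x t)).mul
      (H.smooth_θ.pdt.hasDerivAt_pdx x t)).add ((H.smooth_u.hasDerivAt_pdx x t).mul
        (H.smooth_heatFlux.hasDerivAt_pdx x t))).const_mul (-2) |>.deriv

lemma pdt_energyDensity (H : IsSmoothSolution γ₁ g h c u θ) (x t : ℝ) :
    pdt (energyDensity c u θ) x t = 2 * (pdt θ x t * pdt (pdt θ) x t +
      waveStress c θ x t * pdt (waveStress c θ) x t + u x t * pdt u x t) := by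
  have hdensity : energyDensity c u θ =
      fun x t => pdt θ x t ^ 2 + waveStress c θ x t ^ 2 + u x t ^ 2 := by
    simp only [waveStress, mul_pow]
    rfl
  rw [hdensity]
  refine ((((H.smooth_θ.pdt.hasDerivAt_pdt x t).fun_pow 2).fun_add
    ((H.smooth_waveStress.hasDerivAt_pdt x t).fun_pow 2)).fun_add
      ((H.smooth_u.hasDerivAt_pdt x t).fun_pow 2)).deriv.trans ?_
  push_cast
  ring

lemma pdx_energyFlux_add_pdt_energyDensity (H : IsSmoothSolution γ₁ g h c u θ) (x : ℝ)
    (ht : 0 ≤ t) :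
    pdx (energyFlux g h c u θ) x t + pdt (energyDensity c u θ) x t =
      -2 * (γ₁ * pdt θ x t ^ 2 + 2 * h (θ x t) * pdt θ x t * pdx u x t +
        g (θ x t) * pdx u x t ^ 2) := by
  rw [H.pdx_energyFlux, H.pdt_energyDensity, H.pdt_waveStress, H.heat x t ht,
    show heatFlux g h u θ x t = g (θ x t) * pdx u x t + h (θ x t) * pdt θ x t from rfl]
  linear_combination 2 * pdt θ x t * H.wave x t ht

end IsSmoothSolution

lemma dissipation_nonneg {γ g h p q : ℝ} (hγ : 0 < γ) (hb : 0 ≤ γ * g - h ^ 2) :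
    0 ≤ γ * p ^ 2 + 2 * h * p * q + g * q ^ 2 := by
  refine nonneg_of_mul_nonneg_right (a := γ) ?_ hγ
  calc 0 ≤ (γ * p + h * q) ^ 2 + (γ * g - h ^ 2) * q ^ 2 := by positivity
    _ = γ * (γ * p ^ 2 + 2 * h * p * q + g * q ^ 2) := by ring

lemma IsSmoothSolution.integral_energyDensity_anti (H : IsSmoothSolution γ₁ g h c u θ)
    (hγ₁ : 0 < γ₁) (hb : ∀ r, 0 ≤ γ₁ * g r - h r ^ 2) {s t R : ℝ} (hs : 0 ≤ s) (hst : s ≤ t)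
    (hrest : ∀ τ ∈ Icc s t, ∀ x, R ≤ |x| → AtRest u θ x τ) :
    ∫ x, energyDensity c u θ x t ≤ ∫ x, energyDensity c u θ x s := by
  have hR : -|R| ≤ |R| := neg_le_self (abs_nonneg R)
  have hline {τ : ℝ} (hτ : τ ∈ Icc s t) :
      ∫ x, energyDensity c u θ x τ = ∫ x in -|R|..|R|, energyDensity c u θ x τ := by
    refine (intervalIntegral.integral_eq_integral_of_support_subset fun x hx => ?_).symm
    by_contra hout
    refine hx (hrest τ hτ x ?_).energyDensity_eq_zero
    rw [mem_Ioc, not_and_or, not_lt, not_le] at hout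
    exact (le_abs_self R).trans (le_abs'.2 (hout.imp_right le_of_lt))
  have hflux {x : ℝ} (hx : |x| = |R|) : ∫ τ in s..t, energyFlux g h c u θ x τ = 0 :=
    intervalIntegral.integral_zero_ae (.of_forall fun τ hτ =>
      (hrest τ (uIoc_of_le hst ▸ hτ |> Ioc_subset_Icc_self) x
        (hx ▸ le_abs_self R)).energyFlux_eq_zero)
  have hdiv := setIntegral_prod_pdx_add_pdt H.smooth_energyFlux H.smooth_energyDensity hR hst
  rw [hflux (abs_abs R), hflux (by rw [abs_neg, abs_abs]), ← hline ⟨hst, le_rfl⟩,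
    ← hline ⟨le_rfl, hst⟩, add_zero, sub_zero] at hdiv
  rw [← sub_nonpos, ← hdiv]
  refine setIntegral_nonpos (measurableSet_Icc.prod measurableSet_Icc) fun p hp => ?_
  rw [H.pdx_energyFlux_add_pdt_energyDensity p.1 (hs.trans hp.2.1)]
  exact mul_nonpos_of_nonpos_of_nonneg (by norm_num) (dissipation_nonneg hγ₁ (hb _))

end energy

theorem stmt_4 (γ₁ : ℝ) (g h c : ℝ → ℝ)
    (hg : ContDiff ℝ (⊤ : ℕ∞) g) (hh : ContDiff ℝ (⊤ : ℕ∞) h) (hc : ContDiff ℝ (⊤ : ℕ∞) c)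
    (hcpos : ∀ s, 0 < c s) (hγ₁ : 0 < γ₁)
    (hb : ∀ s, 0 < γ₁ * g s - h s ^ 2)
    (u θ : ℝ → ℝ → ℝ)
    (hu : ContDiff ℝ (⊤ : ℕ∞) (Function.uncurry u))
    (hθ : ContDiff ℝ (⊤ : ℕ∞) (Function.uncurry θ))
    (hsupp : ∀ t : ℝ, 0 ≤ t → HasCompactSupport (fun x => u x t) ∧
      HasCompactSupport (fun x => pdx θ x t) ∧ HasCompactSupport (fun x => pdt θ x t))
    (heat : ∀ x t : ℝ, 0 ≤ t →
      pdt u x t = pdx (fun y s => g (θ y s) * pdx u y s + h (θ y s) * pdt θ y s) x t)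
    (wave : ∀ x t : ℝ, 0 ≤ t →
      pdt (pdt θ) x t + γ₁ * pdt θ x t =
        c (θ x t) * pdx (fun y s => c (θ y s) * pdx θ y s) x t - h (θ x t) * pdx u x t)
    (E : ℝ → ℝ)
    (hE : ∀ t, E t = (1 / 2) * ∫ x : ℝ,
      (pdt θ x t) ^ 2 + c (θ x t) ^ 2 * (pdx θ x t) ^ 2 + (u x t) ^ 2) :
    (∀ s t : ℝ, 0 ≤ s → s ≤ t → E t ≤ E s) ∧ ∀ t : ℝ, 0 ≤ t → E t ≤ E 0 := by
  have H : IsSmoothSolution γ₁ g h c u θ :=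
    { smooth_g := hg, smooth_h := hh, smooth_c := hc, c_pos := hcpos, smooth_u := hu,
      smooth_θ := hθ, heat, wave
      g_pos := fun r => pos_of_mul_pos_right
        ((sq_nonneg (h r)).trans_lt (sub_pos.1 (hb r))) hγ₁.le }
  have hrest (t : ℝ) (ht : 0 ≤ t) : ∃ R, ∀ x, R ≤ |x| → AtRest u θ x t :=
    exists_forall_atRest_of_hasCompactSupport (hsupp t ht).1 (hsupp t ht).2.1 (hsupp t ht).2.2
  have hanti (s t : ℝ) (hs : 0 ≤ s) (hst : s ≤ t) : E t ≤ E s := by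
    obtain ⟨R, hR⟩ := exists_forall_atRest_of_le_abs H hrest hs t
    rw [hE, hE]
    exact mul_le_mul_of_nonneg_left
      (H.integral_energyDensity_anti hγ₁ (fun r => (hb r).le) hs hst hR) (by norm_num)
  exact ⟨hanti, fun t ht => hanti 0 t le_rfl ht⟩
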